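/- Let 0 < p < ∞ and let u be H-harmonic on B_n with K := sup_{0<r<1} (∫_{S^{n-1}} |u(rζ)|^p dσ(ζ))^{1/p} < ∞. Then there is a constant C, depending only on n and p, such that |u(a)| ≤ C·K·(1-|a|)^{-(n-1)/p} for every a ∈ B_n; in particular u has a boundary distribution. -/

import Mathlib

open MeasureTheory Metric Filter Topology Set
open scoped ContDiff ENNReal NNReal

noncomputable section

/-- `E n` is the Euclidean space `ℝⁿ`. -/
abbrev E (n : ℕ) := EuclideanSpace ℝ (Fin n)

/-- The normalized surface measure `σ` on the unit sphere `S^{n-1}` (total mass `1`). -/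
noncomputable def sphMeasure (n : ℕ) : Measure (E n) :=
  ((μH[(n : ℝ) - 1] (sphere (0 : E n) 1))⁻¹) • ((μH[(n : ℝ) - 1]).restrict (sphere (0 : E n) 1))

/-- The Euclidean Laplacian `Δu(x) = Σ ∂²u/∂x_i²`. -/
noncomputable def lap (n : ℕ) (u : E n → ℝ) (x : E n) : ℝ :=
  ∑ i : Fin n, fderiv ℝ (fun y => fderiv ℝ u y (EuclideanSpace.single i 1)) x (EuclideanSpace.single i 1)

/-- The normal derivation operator `Nu(x) = Σ x_i ∂u/∂x_i(x)`, i.e. the derivative of `u`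
at `x` in the direction `x`. -/
noncomputable def Nder (n : ℕ) (u : E n → ℝ) (x : E n) : ℝ := fderiv ℝ u x x

/-- `u` is `H`-harmonic on `B_n` :
`Du(x) = (1-|x|²)²Δu(x) + 2(n-2)(1-|x|²)Nu(x) = 0` on the unit ball. -/
def HHarmonic (n : ℕ) (u : E n → ℝ) : Prop :=
  ∀ x ∈ ball (0 : E n) 1,
    (1 - ‖x‖ ^ 2) ^ 2 * lap n u x + 2 * ((n : ℝ) - 2) * (1 - ‖x‖ ^ 2) * Nder n u x = 0

/-- The hyperbolic Poisson kernel `P_h(x,ξ) = ((1-|x|²)/|x-ξ|²)^{n-1}`. -/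
noncomputable def Ph (n : ℕ) (x ξ : E n) : ℝ := ((1 - ‖x‖ ^ 2) / ‖x - ξ‖ ^ 2) ^ (n - 1)

/-- The Euclidean Poisson kernel `P_e(x,ξ) = (1-|x|²)/|x-ξ|ⁿ`. -/
noncomputable def Pe (n : ℕ) (x ξ : E n) : ℝ := (1 - ‖x‖ ^ 2) / ‖x - ξ‖ ^ n

/-- `u` has a boundary distribution : for every smooth `Φ` on the sphere,
`∫ u(rζ)Φ(ζ)dσ(ζ)` has a finite limit as `r → 1⁻`. -/
def HasBoundaryDistribution (n : ℕ) (u : E n → ℝ) : Prop :=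
  ∀ Φ : E n → ℝ, ContDiff ℝ ∞ Φ →
    ∃ L : ℝ, Tendsto (fun r : ℝ => ∫ ζ, u (r • ζ) * Φ ζ ∂(sphMeasure n)) (𝓝[<] (1 : ℝ)) (𝓝 L)

/-! **Pointwise bound.** The point is a mean value property with powers: `|u x|^p` is controlled by the
average of `|u|^p` over spherical caps, for every `p > 0`. For this, an a priori gradient estimate
replaces explicit kernels. If `u` is `H`-harmonic and `|u| ≤ 2 M` on a ball of radius `2 ρ` which
stays at distance at least `ρ` from the unit sphere, then `Δu` is bounded by a multiple of
`ρ⁻¹ |∇u|`, and the maximum principle applied to `u x - u y - ω |x - y| - κ |x - x₀|²` yields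
`u x₀ - u y ≤ C M |x₀ - y| / ρ` for `y` near `x₀` (`sub_le_of_HHarmonic`). Given `a`, choose `x₀`
maximizing `(ε - |x - a|)^{(n-1)/p} |u x|` on the ball of radius `ε = (1 - |a|) / 2` about `a`, and
set `d = ε - |x₀ - a|`. Near `x₀`, on the scale `d`, one has `|u| ≤ 2 |u x₀|`, so `|u| ≥ |u x₀| / 2`
on a ball of radius comparable to `d`. This ball contains a cap of measure at least `c d^{n-1}`
of a sphere about the origin (`sph_cap_ge`), and the hypothesis bounds `d^{(n-1)/p} |u x₀|`, hence
also `ε^{(n-1)/p} |u a|`, by a multiple of `K` (`exists_pointwise_bound`).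

**Boundary distribution.** For a smooth `Φ` let `F r = ∫ u (r ζ) Φ ζ` and `f r = ∫ N u (r ζ) Φ ζ`,
so that `F' = f / r`. The spherical Laplacian is half the sum of the squares of the rotation fields
`x_i ∂_j - x_j ∂_i`; rotation invariance of the surface measure lets it be moved from `u` to `Φ`
(`pairing_sphLap`). With the equation for `u` this gives
`((r / (1 - r²))^{n-2} f)' = -(r / (1 - r²))^{n-2} G / r`, where `G` is the pairing of `u` with the
spherical Laplacian of `Φ` (`pairing_ode`). If all pairings are `O((1 - r)^{-k-1})`, integration
shows that all their derivatives are `O((1 - r)^{-k})` (`ode_bound`). Starting from the polynomial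
growth just proved, the exponent is lowered until the derivatives are bounded; then each pairing
is Lipschitz and has a limit (`hasBoundaryDistribution_of_growth`).
-/

/-! ### Hausdorff measure of the sphere and of its caps -/

/-- The radial projection onto the sphere is smooth away from the origin, so each face of the cube
has an image of finite `(n-1)`-dimensional measure, and these images cover the sphere. -/
lemma hausdorff_sphere_lt_top (m : ℕ) : μH[(m : ℝ)] (sphere (0 : E (m + 1)) 1) < ⊤ := by
  -- `h i s t` is the point of the face `x i = s` of the cube with the other coordinates `t`
  let h : Fin (m + 1) → ℝ → (Fin m → ℝ) → E (m + 1) := fun i s t =>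
    WithLp.toLp 2 (i.insertNth (α := fun _ => ℝ) s t)
  let g : Fin (m + 1) → ℝ → (Fin m → ℝ) → E (m + 1) := fun i s t => ‖h i s t‖⁻¹ • h i s t
  have hcoord : ∀ i s t, h i s t i = s := fun i s t => by simp [h]
  have hne : ∀ i s t, s ≠ 0 → h i s t ≠ 0 := by
    intro i s t hs h0
    apply hs
    rw [← hcoord i s t, h0]; rfl
  have hcd : ∀ i s, ContDiff ℝ 1 (h i s) := by
    intro i s
    rw [contDiff_euclidean]
    intro j
    refine Fin.succAboveCases i ?_ (fun k => ?_) j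
    · simp only [hcoord]; exact contDiff_const
    · simp only [h, Fin.insertNth_apply_succAbove]
      exact contDiff_apply ℝ ℝ k
  have hgcd : ∀ i s, s ≠ 0 → ContDiff ℝ 1 (g i s) := by
    intro i s hs
    have h1 := (hcd i s)
    have h2 : ContDiff ℝ 1 (fun t => ‖h i s t‖) := h1.norm ℝ (fun t => hne i s t hs)
    exact (h2.inv (fun t => norm_ne_zero_iff.2 (hne i s t hs))).smul h1
  have hfin : ∀ i s, s ≠ 0 →
      μH[(m : ℝ)] (g i s '' closedBall (0 : Fin m → ℝ) 1) < ⊤ := by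
    intro i s hs
    have hd : Differentiable ℝ (g i s) := (hgcd i s hs).differentiable one_ne_zero
    have hc : Continuous (fun t => ‖fderiv ℝ (g i s) t‖₊) :=
      ((hgcd i s hs).continuous_fderiv one_ne_zero).nnnorm
    obtain ⟨C, hC⟩ := ((isCompact_closedBall (0 : Fin m → ℝ) 1).image hc).bddAbove
    have hl : LipschitzOnWith C (g i s) (closedBall (0 : Fin m → ℝ) 1) :=
      (convex_closedBall _ _).lipschitzOnWith_of_nnnorm_fderiv_le (𝕜 := ℝ)
        (fun x _ => hd x) (fun x hx => hC ⟨x, hx, rfl⟩)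
    refine (hl.hausdorffMeasure_image_le (Nat.cast_nonneg m)).trans_lt ?_
    have hv : (μH[(m : ℝ)] : Measure (Fin m → ℝ)) = volume := by
      simpa using hausdorffMeasure_pi_real (ι := Fin m)
    rw [hv]
    exact ENNReal.mul_lt_top (ENNReal.rpow_lt_top_of_nonneg (Nat.cast_nonneg m) ENNReal.coe_ne_top)
      (isCompact_closedBall _ _).measure_lt_top
  have hsub : sphere (0 : E (m + 1)) 1 ⊆
      ⋃ i : Fin (m + 1), (g i 1 '' closedBall 0 1 ∪ g i (-1) '' closedBall 0 1) := by
    intro x hx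
    have hx1 : ‖x‖ = 1 := by simpa using hx
    obtain ⟨i, -, hi⟩ := Finset.exists_max_image Finset.univ (fun i => |x i|) ⟨0, Finset.mem_univ _⟩
    have hi0 : 0 < |x i| := by
      by_contra hcon
      have : x = 0 := by
        ext j
        have := hi j (Finset.mem_univ _)
        have : |x j| ≤ 0 := this.trans (not_lt.1 hcon)
        simpa using this
      rw [this] at hx1; simp at hx1
    have hxi : x i ≠ 0 := abs_pos.1 hi0
    have key : ∀ s : ℝ, x i / |x i| = s → x ∈ g i s '' closedBall 0 1 := by
      intro s hs
      refine ⟨fun k => x (i.succAbove k) / |x i|, ?_, ?_⟩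
      · rw [mem_closedBall_zero_iff, pi_norm_le_iff_of_nonneg zero_le_one]
        intro k
        rw [Real.norm_eq_abs, abs_div, abs_abs]
        exact div_le_one_of_le₀ (hi _ (Finset.mem_univ _)) hi0.le
      · have hh : h i s (fun k => x (i.succAbove k) / |x i|) = |x i|⁻¹ • x := by
          ext j
          refine Fin.succAboveCases i ?_ (fun k => ?_) j
          · rw [hcoord, ← hs]; simp [div_eq_inv_mul]
          · simp [h, div_eq_inv_mul]
        simp only [g, hh, norm_smul, norm_inv, Real.norm_eq_abs, abs_abs, hx1, mul_one, inv_inv,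
          smul_smul]
        rw [mul_inv_cancel₀ hi0.ne', one_smul]
    refine mem_iUnion.2 ⟨i, ?_⟩
    rcases lt_or_gt_of_ne hxi with hn | hn
    · right; apply key; rw [abs_of_neg hn]; field_simp
    · left; apply key; rw [abs_of_pos hn]; field_simp
  refine (measure_mono hsub).trans_lt ((measure_iUnion_le _).trans_lt ?_)
  rw [tsum_fintype, ENNReal.sum_lt_top]
  intro i _
  exact (measure_union_le _ _).trans_lt
    (ENNReal.add_lt_top.2 ⟨hfin i 1 one_ne_zero, hfin i (-1) (by norm_num)⟩)

/-- A cap of radius `δ` has `(n-1)`-dimensional measure at least `c δ^{n-1}`: the orthogonal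
projection onto the tangent hyperplane at its centre does not increase distances, and it maps
the cap onto a set which contains a cube of side comparable to `δ`. -/
lemma hausdorff_cap_ge (m : ℕ) (ζ : E (m + 1)) (hζ : ‖ζ‖ = 1) (δ : ℝ) (hδ : 0 < δ) (hδ1 : δ ≤ 1) :
    ENNReal.ofReal ((δ / (m + 1)) ^ m) ≤ μH[(m : ℝ)] (sphere (0 : E (m + 1)) 1 ∩ ball ζ δ) := by
  have hm0 : (0 : ℝ) < m + 1 := by positivity
  have hζ0 : ζ ≠ 0 := by rintro rfl; simp at hζ
  have : Fact (Module.finrank ℝ (E (m + 1)) = m + 1) := ⟨by simp⟩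
  let b := OrthonormalBasis.fromOrthogonalSpanSingleton (𝕜 := ℝ) m hζ0
  let f : E (m + 1) → (Fin m → ℝ) := fun x i => inner ℝ (b i : E (m + 1)) x
  have hbn : ∀ i, ‖(b i : E (m + 1))‖ = 1 := fun i => b.orthonormal.1 i
  have hbo : ∀ i, inner ℝ (b i : E (m + 1)) ζ = 0 := by
    intro i
    have := (Submodule.mem_orthogonal_singleton_iff_inner_right (𝕜 := ℝ)).1 (b i).2
    rw [real_inner_comm]; exact this
  have hf : LipschitzWith 1 f := by
    refine LipschitzWith.of_dist_le_mul fun x y => ?_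
    rw [NNReal.coe_one, one_mul, dist_pi_le_iff dist_nonneg]
    intro i
    rw [Real.dist_eq, dist_eq_norm, ← inner_sub_right]
    simpa [hbn i] using abs_real_inner_le_norm (b i : E (m + 1)) (x - y)
  have hsub : ball (0 : Fin m → ℝ) (δ / (2 * (m + 1))) ⊆
      f '' (sphere (0 : E (m + 1)) 1 ∩ ball ζ δ) := by
    intro t ht
    rw [mem_ball_zero_iff, pi_norm_lt_iff (by positivity)] at ht
    let w : (ℝ ∙ ζ)ᗮ := ∑ i, t i • b i
    have hwζ : inner ℝ (w : E (m + 1)) ζ = 0 := by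
      have := (Submodule.mem_orthogonal_singleton_iff_inner_right (𝕜 := ℝ)).1 w.2
      rw [real_inner_comm]; exact this
    have hwn : ‖(w : E (m + 1))‖ ≤ δ / 2 := by
      have h1 : ‖w‖ ≤ ∑ i : Fin m, δ / (2 * (m + 1)) := by
        refine (norm_sum_le _ _).trans (Finset.sum_le_sum fun i _ => ?_)
        rw [norm_smul]
        have : ‖b i‖ = 1 := b.orthonormal.1 i
        rw [this, mul_one]
        exact (ht i).le
      rw [Finset.sum_const, Finset.card_univ, Fintype.card_fin, nsmul_eq_mul] at h1
      refine (show ‖(w : E (m + 1))‖ = ‖w‖ from rfl).trans_le (h1.trans ?_)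
      rw [mul_div_assoc', div_le_div_iff₀ (by positivity) two_pos]
      nlinarith
    have hwn2 : ‖(w : E (m + 1))‖ ^ 2 ≤ δ ^ 2 / 4 := by
      nlinarith [norm_nonneg (w : E (m + 1))]
    set q : ℝ := Real.sqrt (1 - ‖(w : E (m + 1))‖ ^ 2) with hq
    have hq2 : q ^ 2 = 1 - ‖(w : E (m + 1))‖ ^ 2 := Real.sq_sqrt (by nlinarith)
    have hq0 : 0 ≤ q := Real.sqrt_nonneg _
    have hq1 : q ≤ 1 := by nlinarith [sq_nonneg ‖(w : E (m + 1))‖]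
    refine ⟨(w : E (m + 1)) + q • ζ, ⟨?_, ?_⟩, ?_⟩
    · rw [mem_sphere_zero_iff_norm]
      have : ‖(w : E (m + 1)) + q • ζ‖ ^ 2 = 1 := by
        rw [norm_add_sq_real, inner_smul_right, hwζ, norm_smul, hζ, mul_one, Real.norm_eq_abs,
          sq_abs, hq2]; ring
      nlinarith [norm_nonneg ((w : E (m + 1)) + q • ζ)]
    · rw [mem_ball, dist_eq_norm]
      have h1 : (w : E (m + 1)) + q • ζ - ζ = (w : E (m + 1)) + (q - 1) • ζ := by
        rw [sub_smul, one_smul]; abel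
      have : ‖(w : E (m + 1)) + q • ζ - ζ‖ ^ 2 < δ ^ 2 := by
        rw [h1, norm_add_sq_real, inner_smul_right, hwζ, norm_smul, hζ, mul_one, Real.norm_eq_abs,
          sq_abs]
        nlinarith
      exact lt_of_pow_lt_pow_left₀ 2 hδ.le this
    · funext i
      simp only [f]
      rw [inner_add_right, inner_smul_right, hbo, mul_zero, add_zero]
      have h1 : inner ℝ (b i : E (m + 1)) (w : E (m + 1)) = inner ℝ (b i) w := rfl
      rw [h1]
      simp only [w]
      exact b.orthonormal.inner_right_fintype t i
  have hv : (μH[(m : ℝ)] : Measure (Fin m → ℝ)) = volume := by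
    simpa using hausdorffMeasure_pi_real (ι := Fin m)
  have h1 := hf.hausdorffMeasure_image_le (Nat.cast_nonneg m) (sphere (0 : E (m + 1)) 1 ∩ ball ζ δ)
  rw [hv] at h1
  have h2 := (measure_mono hsub).trans h1
  rw [Real.volume_pi_ball _ (by positivity)] at h2
  simp only [Fintype.card_fin, ENNReal.coe_one, ENNReal.one_rpow, one_mul] at h2
  have h3 : 2 * (δ / (2 * ((m : ℝ) + 1))) = δ / (m + 1) := by field_simp
  rwa [h3] at h2

/-- The lower bound for the normalized measure of caps, with the ball centred on the sphere. -/
lemma sph_cap_ge (n : ℕ) (hn : 1 ≤ n) : ∃ c : ℝ, 0 < c ∧ ∀ (ζ : E n), ‖ζ‖ = 1 → ∀ δ : ℝ,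
    0 < δ → δ ≤ 1 → ENNReal.ofReal (c * δ ^ ((n : ℝ) - 1)) ≤ sphMeasure n (ball ζ δ) := by
  obtain ⟨m, rfl⟩ : ∃ m, n = m + 1 := ⟨n - 1, by omega⟩
  have hT := (hausdorff_sphere_lt_top m)
  have hmm : ((m + 1 : ℕ) : ℝ) - 1 = m := by push_cast; ring
  have hT0 : μH[(m : ℝ)] (sphere (0 : E (m + 1)) 1) ≠ 0 := by
    have h1 := hausdorff_cap_ge m (EuclideanSpace.single 0 1) (by simp) 1 one_pos le_rfl
    have h2 : 0 < ENNReal.ofReal ((1 / ((m : ℝ) + 1)) ^ m) := by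
      rw [ENNReal.ofReal_pos]; positivity
    exact (h2.trans_le (h1.trans (measure_mono inter_subset_left))).ne'
  have hTr : 0 < (μH[(m : ℝ)] (sphere (0 : E (m + 1)) 1)).toReal := ENNReal.toReal_pos hT0 hT.ne
  refine ⟨(μH[(m : ℝ)] (sphere (0 : E (m + 1)) 1)).toReal⁻¹ * (1 / ((m : ℝ) + 1)) ^ m,
    by positivity, fun ζ hζ δ hδ hδ1 => ?_⟩
  have h1 := hausdorff_cap_ge m ζ hζ δ hδ hδ1
  rw [sphMeasure, hmm, Measure.smul_apply, Measure.restrict_apply measurableSet_ball, inter_comm,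
    smul_eq_mul, Real.rpow_natCast, mul_assoc, ENNReal.ofReal_mul (by positivity),
    ENNReal.ofReal_inv_of_pos hTr, ENNReal.ofReal_toReal hT.ne]
  gcongr
  refine le_trans (le_of_eq ?_) h1
  congr 1
  rw [← mul_pow]; congr 1; ring

lemma sph_univ (n : ℕ) (hn : 1 ≤ n) : sphMeasure n univ = 1 := by
  obtain ⟨m, rfl⟩ : ∃ m, n = m + 1 := ⟨n - 1, by omega⟩
  have hT := (hausdorff_sphere_lt_top m)
  have hmm : ((m + 1 : ℕ) : ℝ) - 1 = m := by push_cast; ring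
  have hT0 : μH[(m : ℝ)] (sphere (0 : E (m + 1)) 1) ≠ 0 := by
    have h1 := hausdorff_cap_ge m (EuclideanSpace.single 0 1) (by simp) 1 one_pos le_rfl
    have h2 : 0 < ENNReal.ofReal ((1 / ((m : ℝ) + 1)) ^ m) := by
      rw [ENNReal.ofReal_pos]; positivity
    exact (h2.trans_le (h1.trans (measure_mono inter_subset_left))).ne'
  rw [sphMeasure, hmm, Measure.smul_apply, Measure.restrict_apply MeasurableSet.univ, univ_inter,
    smul_eq_mul]
  exact ENNReal.inv_mul_cancel hT0 hT.ne

lemma sph_ae_mem (n : ℕ) : ∀ᵐ ζ ∂(sphMeasure n), ζ ∈ sphere (0 : E n) 1 := by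
  rw [sphMeasure]
  exact Measure.ae_smul_measure (ae_restrict_mem isClosed_sphere.measurableSet) _

lemma sph_map (n : ℕ) (R : E n ≃ₗᵢ[ℝ] E n) : MeasurePreserving R (sphMeasure n) (sphMeasure n) := by
  have h1 : MeasurePreserving R (μH[(n : ℝ) - 1]) (μH[(n : ℝ) - 1]) :=
    R.toIsometryEquiv.measurePreserving_hausdorffMeasure _
  have h2 := h1.restrict_preimage (s := sphere (0 : E n) 1) isClosed_sphere.measurableSet
  have h3 : R ⁻¹' sphere (0 : E n) 1 = sphere (0 : E n) 1 := by
    ext x; simp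
  rw [h3] at h2
  exact h2.smul_measure _

/-! ### The Hessian and the Laplacian -/

lemma second_deriv_nonpos_of_isLocalMax {g g' : ℝ → ℝ} {c : ℝ} (hmax : IsLocalMax g 0)
    (hg : ∀ᶠ t in 𝓝 (0 : ℝ), HasDerivAt g (g' t) t) (hg' : HasDerivAt g' c 0) : c ≤ 0 := by
  by_contra! hc
  have he : deriv g =ᶠ[𝓝 0] g' := hg.mono fun t ht => ht.deriv
  have h1 : deriv (deriv g) 0 = c := by rw [he.deriv_eq, hg'.deriv]
  have h0 : deriv g 0 = 0 := hmax.deriv_eq_zero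
  have hmin := isLocalMin_of_deriv_deriv_pos (f := g) (x₀ := 0) (by rw [h1]; exact hc) h0
    hg.self_of_nhds.continuousAt
  have hconst : g =ᶠ[𝓝 0] fun _ => g 0 := by
    filter_upwards [hmin, hmax] with t h2 h3 using le_antisymm h3 h2
  have h2 : deriv g =ᶠ[𝓝 0] fun _ => 0 := by
    have := hconst.deriv
    simpa using this
  have h3 : deriv (deriv g) 0 = 0 := by rw [h2.deriv_eq]; simp
  linarith

/-- The Hessian of `u` at `x`, as a continuous bilinear form. -/
abbrev hess (n : ℕ) (u : E n → ℝ) (x : E n) : E n →L[ℝ] E n →L[ℝ] ℝ := fderiv ℝ (fderiv ℝ u) x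

lemma hasDerivAt_line {n : ℕ} {u : E n → ℝ} {x : E n} (hu : ContDiffAt ℝ 2 u x) (v : E n) :
    (∀ᶠ t in 𝓝 (0 : ℝ), HasDerivAt (fun t : ℝ => u (x + t • v)) (fderiv ℝ u (x + t • v) v) t) ∧
    HasDerivAt (fun t : ℝ => fderiv ℝ u (x + t • v) v) (hess n u x v v) 0 := by
  have hline : ∀ t : ℝ, HasDerivAt (fun t : ℝ => x + t • v) v t := fun t => by
    simpa using ((hasDerivAt_id t).smul_const v).const_add x
  have hd : ∀ᶠ y in 𝓝 x, DifferentiableAt ℝ u y := by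
    filter_upwards [hu.eventually (by simp)] with y hy using hy.differentiableAt two_ne_zero
  constructor
  · have hc : Tendsto (fun t : ℝ => x + t • v) (𝓝 0) (𝓝 x) := by
      have := (hline 0).continuousAt.tendsto
      simpa using this
    filter_upwards [hc.eventually hd] with t ht
    exact ht.hasFDerivAt.comp_hasDerivAt t (hline t)
  · have h1 : DifferentiableAt ℝ (fderiv ℝ u) (x + (0 : ℝ) • v) := by
      have := (hu.fderiv_right (m := 1) (by norm_num)).differentiableAt one_ne_zero
      simpa using this
    have h2 := h1.hasFDerivAt.comp_hasDerivAt 0 (hline 0)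
    have h3 := h2.clm_apply (hasDerivAt_const 0 v)
    simpa using h3

lemma lap_eq_sum_hess {n : ℕ} {u : E n → ℝ} {x : E n} (hu : ContDiffAt ℝ 2 u x) :
    lap n u x = ∑ i, hess n u x (EuclideanSpace.single i 1) (EuclideanSpace.single i 1) := by
  refine Finset.sum_congr rfl fun i _ => ?_
  have h1 : DifferentiableAt ℝ (fderiv ℝ u) x :=
    (hu.fderiv_right (m := 1) (by norm_num)).differentiableAt one_ne_zero
  rw [fderiv_clm_apply h1 (differentiableAt_const _)]
  simp

lemma sum_coord_smul_single {n : ℕ} (e : E n) :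
    ∑ i, e i • (EuclideanSpace.single i (1 : ℝ) : E n) = e := by
  ext j
  simp [Finset.sum_apply, Pi.single_apply]

/-- The trace of a bilinear form is unchanged by the reflection in the hyperplane `e⊥`. -/
lemma trace_reflection {n : ℕ} (H : E n →L[ℝ] E n →L[ℝ] ℝ) (e : E n) (he : ‖e‖ = 1) :
    ∑ i, H (EuclideanSpace.single i 1 - (2 * e i) • e) (EuclideanSpace.single i 1 - (2 * e i) • e)
      = ∑ i, H (EuclideanSpace.single i 1) (EuclideanSpace.single i 1) := by
  have hsq : ∑ i, e i * e i = 1 := by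
    have := EuclideanSpace.real_norm_sq_eq e
    rw [he] at this
    simpa [sq] using this.symm
  have h1 : ∑ i, e i * H (EuclideanSpace.single i 1) e = H e e := by
    conv_rhs => rw [← sum_coord_smul_single e]
    rw [sum_coord_smul_single e]
    conv_rhs => arg 1; rw [← sum_coord_smul_single e]
    simp [map_sum]
  have h2 : ∑ i, e i * H e (EuclideanSpace.single i 1) = H e e := by
    conv_rhs => arg 2; rw [← sum_coord_smul_single e]
    simp [map_sum]
  have h3 : ∀ i, H (EuclideanSpace.single i 1 - (2 * e i) • e)
      (EuclideanSpace.single i 1 - (2 * e i) • e) =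
      H (EuclideanSpace.single i 1) (EuclideanSpace.single i 1)
      - 2 * (e i * H (EuclideanSpace.single i 1) e) - 2 * (e i * H e (EuclideanSpace.single i 1))
      + 4 * (e i * e i) * H e e := by
    intro i
    simp only [map_sub, map_smul, sub_apply, smul_apply,
      smul_eq_mul]
    ring
  simp only [h3, Finset.sum_add_distrib, Finset.sum_sub_distrib, ← Finset.mul_sum,
    ← Finset.sum_mul, h1, h2, hsq]
  ring

/-! ### A gradient estimate by doubling the variables -/

/-- Away from the boundary the equation bounds the Laplacian by the radial derivative, since
`1 - |x|² ≥ ρ`. -/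
lemma abs_lap_le {n : ℕ} (hn : 3 ≤ n) {u : E n → ℝ} (hH : HHarmonic n u) {x : E n} {ρ : ℝ}
    (hρ : 0 < ρ) (hx : ‖x‖ + ρ ≤ 1) : |lap n u x| ≤ 2 * n / ρ * |fderiv ℝ u x x| := by
  have hx0 := norm_nonneg x
  have hn3 : (3 : ℝ) ≤ n := by exact_mod_cast hn
  have hw : ρ ≤ 1 - ‖x‖ ^ 2 := by nlinarith
  have hw0 : 0 < 1 - ‖x‖ ^ 2 := hρ.trans_le hw
  have h := hH x (by rw [mem_ball_zero_iff]; linarith)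
  have h1 : (1 - ‖x‖ ^ 2) * lap n u x = -(2 * ((n : ℝ) - 2)) * fderiv ℝ u x x := by
    have h2 : (1 - ‖x‖ ^ 2) * ((1 - ‖x‖ ^ 2) * lap n u x + 2 * ((n : ℝ) - 2) * fderiv ℝ u x x) = 0 := by
      rw [← h, Nder]; ring
    rcases mul_eq_zero.1 h2 with h3 | h3 <;> linarith
  have h2 : (1 - ‖x‖ ^ 2) * |lap n u x| = 2 * ((n : ℝ) - 2) * |fderiv ℝ u x x| := by
    rw [← abs_of_pos hw0, ← abs_mul, h1, abs_mul, abs_neg, abs_of_pos (by linarith : 0 < 2 * ((n : ℝ) - 2))]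
  rw [div_mul_eq_mul_div, le_div_iff₀ hρ]
  nlinarith [abs_nonneg (lap n u x), abs_nonneg (fderiv ℝ u x x)]

set_option maxHeartbeats 1000000 in
/-- A one-sided Lipschitz estimate, by the maximum principle for
`u x - u y - ω |x - y| - κ |x - x₀|²` with the concave modulus `ω s = A (s - B s²)`. At an
interior positive maximum, moving `x` and `y` along directions that are mirror images in the
hyperplane orthogonal to `x - y` cancels the second derivatives of `|x - y|` except in the
direction of `x - y` itself, where the concavity of `ω` beats the first-order term. -/
lemma sub_le_of_HHarmonic {n : ℕ} (hn : 3 ≤ n) {u : E n → ℝ}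
    (hu : ContDiffOn ℝ 2 u (ball (0 : E n) 1)) (hH : HHarmonic n u) {x₀ : E n} {ρ M : ℝ}
    (hρ : 0 < ρ) (hx₀ : ‖x₀‖ + 3 * ρ ≤ 1) (hM : 0 < M)
    (hb : ∀ x ∈ closedBall x₀ (2 * ρ), |u x| ≤ 2 * M) (y₀ : E n)
    (hy₀ : ‖x₀ - y₀‖ ≤ ρ / (2 * n)) : u x₀ - u y₀ ≤ 16 * n * M / ρ * ‖x₀ - y₀‖ := by
  have hn3 : (3 : ℝ) ≤ n := by exact_mod_cast hn
  have hn0 : (0 : ℝ) < n := by linarith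
  -- `A` and `κ` make the penalty at least `4 M ≥ u x - u y` where `|x - y|` or `|x - x₀|` is
  -- maximal; `B` is the largest constant for which `ω` is increasing on `[0, ρ / (2 n)]`.
  obtain ⟨A, hA⟩ : ∃ A : ℝ, A = 16 * n * M / ρ := ⟨_, rfl⟩
  obtain ⟨B, hB⟩ : ∃ B : ℝ, B = n / ρ := ⟨_, rfl⟩
  obtain ⟨κ, hκ⟩ : ∃ κ : ℝ, κ = 4 * M / ρ ^ 2 := ⟨_, rfl⟩
  have hA0 : 0 < A := by rw [hA]; positivity
  have hB0 : 0 < B := by rw [hB]; positivity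
  have hκ0 : 0 < κ := by rw [hκ]; positivity
  have hs1 : ρ / (2 * n) ≤ ρ := by
    rw [div_le_iff₀ (by positivity)]; nlinarith
  have hBs1 : B * (ρ / (2 * n)) = 1 / 2 := by rw [hB]; field_simp
  have hBs : ∀ s, s ≤ ρ / (2 * n) → B * s ≤ 1 / 2 := fun s hs => by
    rw [← hBs1]; gcongr
  let Q : Set (E n × E n) := {z | ‖z.1 - x₀‖ ≤ ρ ∧ ‖z.1 - z.2‖ ≤ ρ / (2 * n)}
  let Φ : E n × E n → ℝ := fun z =>
    u z.1 - u z.2 - A * (‖z.1 - z.2‖ - B * ‖z.1 - z.2‖ ^ 2) - κ * ‖z.1 - x₀‖ ^ 2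
  have hin1 : ∀ z ∈ Q, z.1 ∈ closedBall x₀ (2 * ρ) := fun z hz => by
    rw [mem_closedBall, dist_eq_norm]; linarith [hz.1]
  have hin2 : ∀ z ∈ Q, z.2 ∈ closedBall x₀ (2 * ρ) := fun z hz => by
    rw [mem_closedBall, dist_eq_norm]
    have : z.2 - x₀ = (z.1 - x₀) - (z.1 - z.2) := by abel
    rw [this]; linarith [norm_sub_le (z.1 - x₀) (z.1 - z.2), hz.1, hz.2]
  have hball : ∀ x ∈ closedBall x₀ (2 * ρ), ‖x‖ + ρ ≤ 1 := fun x hx => by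
    rw [mem_closedBall, dist_eq_norm] at hx
    have : x = x₀ + (x - x₀) := by abel
    rw [this]; linarith [norm_add_le x₀ (x - x₀)]
  have hball' : ∀ x ∈ closedBall x₀ (2 * ρ), x ∈ ball (0 : E n) 1 := fun x hx => by
    rw [mem_ball_zero_iff]; linarith [hball x hx]
  have hQc : IsCompact Q := by
    refine ((isCompact_closedBall x₀ (2 * ρ)).prod
      (isCompact_closedBall x₀ (2 * ρ))).of_isClosed_subset ?_ fun z hz => ⟨hin1 z hz, hin2 z hz⟩
    have c1 : Continuous fun z : E n × E n => ‖z.1 - x₀‖ := by fun_prop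
    have c2 : Continuous fun z : E n × E n => ‖z.1 - z.2‖ := by fun_prop
    exact (isClosed_le c1 continuous_const).inter (isClosed_le c2 continuous_const)
  have hΦc : ContinuousOn Φ Q := by
    have h1 : ContinuousOn (fun z : E n × E n => u z.1) Q :=
      hu.continuousOn.comp continuous_fst.continuousOn fun z hz => hball' _ (hin1 z hz)
    have h2 : ContinuousOn (fun z : E n × E n => u z.2) Q :=
      hu.continuousOn.comp continuous_snd.continuousOn fun z hz => hball' _ (hin2 z hz)
    exact ((h1.sub h2).sub (by fun_prop)).sub (by fun_prop)
  have h0Q : (x₀, y₀) ∈ Q := ⟨by simpa using hρ.le, hy₀⟩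
  obtain ⟨⟨x, y⟩, hxy, hmax⟩ := hQc.exists_isMaxOn ⟨_, h0Q⟩ hΦc
  have hmax' : ∀ z ∈ Q, Φ z ≤ Φ (x, y) := hmax
  suffices hneg : Φ (x, y) ≤ 0 by
    have h1 := (hmax' _ h0Q).trans hneg
    simp only [Φ, sub_self, norm_zero] at h1
    rw [← hA]
    nlinarith [mul_nonneg (mul_nonneg hA0.le hB0.le) (sq_nonneg ‖x₀ - y₀‖)]
  by_contra! hpos
  have hxm : x ∈ closedBall x₀ (2 * ρ) := hin1 (x, y) hxy
  have hym : y ∈ closedBall x₀ (2 * ρ) := hin2 (x, y) hxy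
  have hux := hb x hxm
  have huy := hb y hym
  rw [abs_le] at hux huy
  obtain ⟨s, hs⟩ : ∃ s, s = ‖x - y‖ := ⟨_, rfl⟩
  have hΦv : Φ (x, y) = u x - u y - A * (s - B * s ^ 2) - κ * ‖x - x₀‖ ^ 2 := by simp [Φ, hs]
  have hsle : s ≤ ρ / (2 * n) := by rw [hs]; exact hxy.2
  have hs0' : 0 ≤ s := by rw [hs]; positivity
  have hω0 : 0 ≤ A * (s - B * s ^ 2) := by
    have := hBs s hsle
    apply mul_nonneg hA0.le; nlinarith
  have hs0 : 0 < s := by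
    rcases hs0'.lt_or_eq with h | h
    · exact h
    · have hxy0 : x = y := by rw [← sub_eq_zero, ← norm_eq_zero, ← hs, ← h]
      rw [hΦv, ← h, hxy0] at hpos
      nlinarith [mul_nonneg hκ0.le (sq_nonneg ‖y - x₀‖)]
  have hxlt : ‖x - x₀‖ < ρ := by
    refine lt_of_le_of_ne hxy.1 fun h => ?_
    have h1 : κ * ρ ^ 2 = 4 * M := by rw [hκ]; field_simp
    rw [hΦv, h, h1] at hpos
    linarith
  have hslt : s < ρ / (2 * n) := by
    refine lt_of_le_of_ne hsle fun h => ?_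
    have h1 : A * (s - B * s ^ 2) = 4 * M := by
      rw [h, hA, hB]; field_simp; ring
    rw [hΦv, h1] at hpos
    nlinarith [mul_nonneg hκ0.le (sq_nonneg ‖x - x₀‖)]
  -- `Φ` has a local maximum at `0` along every line through `(x, y)`
  have hloc : ∀ v w : E n, IsLocalMax (fun t : ℝ => Φ (x + t • v, y + t • w)) 0 := by
    intro v w
    have h1 : ∀ᶠ t in 𝓝 (0 : ℝ), ‖x + t • v - x₀‖ < ρ := by
      have : Continuous fun t : ℝ => ‖x + t • v - x₀‖ := by fun_prop
      exact this.continuousAt.eventually_lt continuousAt_const (by simpa using hxlt)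
    have h2 : ∀ᶠ t in 𝓝 (0 : ℝ), ‖(x + t • v) - (y + t • w)‖ < ρ / (2 * n) := by
      have : Continuous fun t : ℝ => ‖(x + t • v) - (y + t • w)‖ := by fun_prop
      exact this.continuousAt.eventually_lt continuousAt_const (by simpa [← hs] using hslt)
    filter_upwards [h1, h2] with t h3 h4
    have := hmax' (x + t • v, y + t • w) ⟨h3.le, h4.le⟩
    simpa using this
  have hcx : ContDiffAt ℝ 2 u x := hu.contDiffAt (isOpen_ball.mem_nhds (hball' x hxm))
  have hcy : ContDiffAt ℝ 2 u y := hu.contDiffAt (isOpen_ball.mem_nhds (hball' y hym))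
  have hω' : |A * (1 - 2 * B * s)| ≤ A := by
    have := hBs s hsle
    rw [abs_mul, abs_of_pos hA0]
    have h1 : |1 - 2 * B * s| ≤ 1 := by rw [abs_le]; constructor <;> nlinarith
    nlinarith
  -- the first-order condition bounds both radial derivatives, hence both Laplacians
  have hfirst : ∀ v w : E n, fderiv ℝ u x v - fderiv ℝ u y w
      - A * (1 - 2 * B * s) * (inner ℝ (x - y) (v - w) / s) - κ * (2 * inner ℝ (x - x₀) v) = 0 := by
    intro v w
    have h1 := (hasDerivAt_line hcx v).1.self_of_nhds
    have h2 := (hasDerivAt_line hcy w).1.self_of_nhds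
    have hl : ∀ p q : E n, HasDerivAt (fun t : ℝ => p + t • q) q 0 := fun p q => by
      simpa using ((hasDerivAt_id (0 : ℝ)).smul_const q).const_add p
    have h3 : HasDerivAt (fun t : ℝ => ‖x - y + t • (v - w)‖ ^ 2) (2 * inner ℝ (x - y) (v - w)) 0 := by
      simpa using (hl (x - y) (v - w)).norm_sq
    have h4 : HasDerivAt (fun t : ℝ => ‖x - x₀ + t • v‖ ^ 2) (2 * inner ℝ (x - x₀) v) 0 := by
      simpa using (hl (x - x₀) v).norm_sq
    have h5 : HasDerivAt (fun t : ℝ => ‖x - y + t • (v - w)‖) (inner ℝ (x - y) (v - w) / s) 0 := by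
      have := h3.sqrt (by simp [← hs, hs0.ne'])
      simp only [Real.sqrt_sq (norm_nonneg _)] at this
      convert this using 1
      simp only [zero_smul, add_zero, ← hs]
      field_simp
    have h6 := (((h1.sub h2).sub ((h5.sub (h3.const_mul B)).const_mul A)).sub (h4.const_mul κ))
    have h7 : (fun t : ℝ => Φ (x + t • v, y + t • w)) =
        fun t : ℝ => u (x + t • v) - u (y + t • w) - A * (‖x - y + t • (v - w)‖
          - B * ‖x - y + t • (v - w)‖ ^ 2) - κ * ‖x - x₀ + t • v‖ ^ 2 := by
      funext t
      have e1 : (x + t • v) - (y + t • w) = x - y + t • (v - w) := by rw [smul_sub]; abel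
      have e2 : x + t • v - x₀ = x - x₀ + t • v := by abel
      simp only [Φ, e1, e2]
    have h8 := (hloc v w)
    rw [h7] at h8
    have h9 := h8.hasDerivAt_eq_zero h6
    simp only [zero_smul, add_zero] at h9
    rw [← h9]
    field_simp
  have hxn : ‖x‖ ≤ 1 := by linarith [hball x hxm]
  have hyn : ‖y‖ ≤ 1 := by linarith [hball y hym]
  have hin : ∀ v : E n, ‖v‖ ≤ 1 → |A * (1 - 2 * B * s) * (inner ℝ (x - y) v / s)| ≤ A := by
    intro v hv
    have h1 : |inner ℝ (x - y) v / s| ≤ 1 := by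
      rw [abs_div, abs_of_pos hs0, div_le_one hs0]
      refine (abs_real_inner_le_norm _ _).trans ?_
      rw [← hs]; nlinarith
    rw [abs_mul]
    nlinarith [abs_nonneg (A * (1 - 2 * B * s)), abs_nonneg (inner ℝ (x - y) v / s)]
  have hNx : |fderiv ℝ u x x| ≤ A + 2 * κ * ρ := by
    have h1 := hfirst x 0
    simp only [map_zero, sub_zero] at h1
    have h2 := hin x hxn
    have h3 : |inner ℝ (x - x₀) x| ≤ ρ := by
      refine (abs_real_inner_le_norm _ _).trans ?_
      nlinarith [norm_nonneg x, norm_nonneg (x - x₀)]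
    rw [abs_le] at h2 h3 ⊢
    constructor <;> nlinarith
  have hNy : |fderiv ℝ u y y| ≤ A := by
    have h1 := hfirst 0 y
    simp only [map_zero, inner_zero_right, zero_sub, mul_zero, sub_zero] at h1
    have h2 := hin (-y) (by rwa [norm_neg])
    rw [abs_le] at h2 ⊢
    constructor <;> linarith
  have hLx : |lap n u x| ≤ 2 * n / ρ * (A + 2 * κ * ρ) :=
    (abs_lap_le hn hH hρ (hball x hxm)).trans (by gcongr)
  have hLy : |lap n u y| ≤ 2 * n / ρ * A :=
    (abs_lap_le hn hH hρ (hball y hym)).trans (by gcongr)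
  obtain ⟨e, he⟩ : ∃ e : E n, e = s⁻¹ • (x - y) := ⟨_, rfl⟩
  have he1 : ‖e‖ = 1 := by
    rw [he, norm_smul, ← hs, norm_inv, Real.norm_of_nonneg hs0', inv_mul_cancel₀ hs0.ne']
  have hse : x - y = s • e := by rw [he, smul_smul, mul_inv_cancel₀ hs0.ne', one_smul]
  -- The second-order condition along `v = e_i` and its mirror image `w`: since `v - w` is parallel
  -- to `x - y`, the distance is affine in `t` and `|x - y|` contributes no second derivative.
  have hsecond : ∀ i : Fin n, hess n u x (EuclideanSpace.single i 1) (EuclideanSpace.single i 1)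
      - hess n u y (EuclideanSpace.single i 1 - (2 * e i) • e)
        (EuclideanSpace.single i 1 - (2 * e i) • e) + 8 * A * B * (e i * e i) - 2 * κ ≤ 0 := by
    intro i
    obtain ⟨v, hv⟩ : ∃ v : E n, v = EuclideanSpace.single i 1 := ⟨_, rfl⟩
    obtain ⟨w, hw⟩ : ∃ w : E n, w = EuclideanSpace.single i 1 - (2 * e i) • e := ⟨_, rfl⟩
    rw [← hw, ← hv]
    have hvn : ‖v‖ = 1 := by rw [hv]; simp
    have hvw : v - w = (2 * e i) • e := by rw [hv, hw]; abel
    obtain ⟨h1, h1'⟩ := hasDerivAt_line hcx v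
    obtain ⟨h2, h2'⟩ := hasDerivAt_line hcy w
    have heq : (fun t : ℝ => Φ (x + t • v, y + t • w)) =ᶠ[𝓝 0]
        fun t : ℝ => u (x + t • v) - u (y + t • w) - A * ((s + t * (2 * e i))
          - B * (s + t * (2 * e i)) ^ 2)
          - κ * (‖x - x₀‖ ^ 2 + t * (2 * inner ℝ (x - x₀) v) + t ^ 2) := by
      have hpos : ∀ᶠ t in 𝓝 (0 : ℝ), 0 < s + t * (2 * e i) := by
        have : Continuous fun t : ℝ => s + t * (2 * e i) := by fun_prop
        exact continuousAt_const.eventually_lt this.continuousAt (by simpa using hs0)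
      filter_upwards [hpos] with t ht
      have e1 : ‖(x + t • v) - (y + t • w)‖ = s + t * (2 * e i) := by
        have : (x + t • v) - (y + t • w) = (s + t * (2 * e i)) • e := by
          have : (x + t • v) - (y + t • w) = (x - y) + t • (v - w) := by rw [smul_sub]; abel
          rw [this, hse, hvw, smul_smul, add_smul]
        rw [this, norm_smul, he1, mul_one, Real.norm_of_nonneg ht.le]
      have e2 : ‖x + t • v - x₀‖ ^ 2 = ‖x - x₀‖ ^ 2 + t * (2 * inner ℝ (x - x₀) v) + t ^ 2 := by
        have : x + t • v - x₀ = (x - x₀) + t • v := by abel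
        rw [this, norm_add_sq_real, norm_smul, hvn, inner_smul_right, mul_one, Real.norm_eq_abs,
          sq_abs]
        ring
      simp only [Φ, e1, e2]
    have hmaxg := (hloc v w).congr heq
    have hlin : ∀ t : ℝ, HasDerivAt (fun t : ℝ => s + t * (2 * e i)) (2 * e i) t := fun t => by
      simpa using ((hasDerivAt_id t).mul_const (2 * e i)).const_add s
    have hg1 : ∀ᶠ t in 𝓝 (0 : ℝ), HasDerivAt (fun t : ℝ => u (x + t • v) - u (y + t • w)
          - A * ((s + t * (2 * e i)) - B * (s + t * (2 * e i)) ^ 2)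
          - κ * (‖x - x₀‖ ^ 2 + t * (2 * inner ℝ (x - x₀) v) + t ^ 2))
        (fderiv ℝ u (x + t • v) v - fderiv ℝ u (y + t • w) w
          - A * (2 * e i - B * (2 * (s + t * (2 * e i)) * (2 * e i)))
          - κ * (2 * inner ℝ (x - x₀) v + 2 * t)) t := by
      filter_upwards [h1, h2] with t h3 h4
      have h5 : HasDerivAt (fun t : ℝ => ‖x - x₀‖ ^ 2 + t * (2 * inner ℝ (x - x₀) v) + t ^ 2)
          (2 * inner ℝ (x - x₀) v + 2 * t) t := by
        have := (((hasDerivAt_id t).mul_const (2 * inner ℝ (x - x₀) v)).const_add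
          (‖x - x₀‖ ^ 2)).add (hasDerivAt_pow 2 t)
        exact this.congr_deriv (by simp)
      have h6 := (((h3.sub h4).sub (((hlin t).sub (((hlin t).pow 2).const_mul B)).const_mul A)).sub
        (h5.const_mul κ))
      exact h6.congr_deriv (by norm_num)
    have hg2 : HasDerivAt (fun t : ℝ => fderiv ℝ u (x + t • v) v - fderiv ℝ u (y + t • w) w
          - A * (2 * e i - B * (2 * (s + t * (2 * e i)) * (2 * e i)))
          - κ * (2 * inner ℝ (x - x₀) v + 2 * t))
        (hess n u x v v - hess n u y w w + 8 * A * B * (e i * e i) - 2 * κ) 0 := by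
      have h5 : HasDerivAt (fun t : ℝ => 2 * inner ℝ (x - x₀) v + 2 * t) 2 0 := by
        simpa using ((hasDerivAt_id (0 : ℝ)).const_mul 2).const_add (2 * inner ℝ (x - x₀) v)
      have h6 : HasDerivAt (fun t : ℝ => A * (2 * e i - B * (2 * (s + t * (2 * e i)) * (2 * e i))))
          (-(8 * A * B * (e i * e i))) 0 := by
        have := ((((((hlin 0).const_mul 2).mul_const (2 * e i)).const_mul B).const_sub
          (2 * e i)).const_mul A)
        exact this.congr_deriv (by ring)
      exact (((h1'.sub h2').sub h6).sub (h5.const_mul κ)).congr_deriv (by ring)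
    exact second_deriv_nonpos_of_isLocalMax hmaxg hg1 hg2
  have hsum := Finset.sum_nonpos fun i (_ : i ∈ Finset.univ) => hsecond i
  have hsq : ∑ i, e i * e i = 1 := by
    have := EuclideanSpace.real_norm_sq_eq e
    rw [he1] at this
    simpa [sq] using this.symm
  rw [Finset.sum_sub_distrib, Finset.sum_add_distrib, Finset.sum_sub_distrib, ← Finset.mul_sum, hsq,
    trace_reflection _ e he1, ← lap_eq_sum_hess hcx, ← lap_eq_sum_hess hcy, Finset.sum_const,
    Finset.card_univ, Fintype.card_fin, nsmul_eq_mul] at hsum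
  rw [abs_le] at hLx hLy
  have hfin : 8 * A * B ≤ n * (2 * κ) + (2 * n / ρ * (A + 2 * κ * ρ) + 2 * n / ρ * A) := by
    linarith [hLx.1, hLy.2]
  have e1 : 8 * A * B = 128 * n ^ 2 * M / ρ ^ 2 := by rw [hA, hB]; field_simp; ring
  have e2 : n * (2 * κ) + (2 * n / ρ * (A + 2 * κ * ρ) + 2 * n / ρ * A)
      = (64 * n ^ 2 + 24 * n) * M / ρ ^ 2 := by rw [hA, hκ]; field_simp; ring
  rw [e1, e2, div_le_div_iff_of_pos_right (by positivity)] at hfin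
  nlinarith [mul_pos hn0 hM]

/-! ### The pointwise bound -/

lemma HHarmonic.neg {n : ℕ} {u : E n → ℝ} (h : HHarmonic n u) : HHarmonic n (-u) := by
  intro x hx
  have h1 : lap n (-u) x = -lap n u x := by
    simp only [lap, fderiv_neg, neg_apply, fderiv_fun_neg, Finset.sum_neg_distrib]
  have h2 : Nder n (-u) x = -Nder n u x := by simp [Nder, fderiv_neg]
  rw [h1, h2]
  linarith [h x hx]

/-- A function bounded by `2 |u x₀|` near `x₀` stays above `|u x₀| / 2` in modulus on a smaller
ball about `x₀`. -/
lemma half_le_abs {n : ℕ} (hn : 3 ≤ n) {u : E n → ℝ}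
    (hu : ContDiffOn ℝ 2 u (ball (0 : E n) 1)) (hH : HHarmonic n u) {x₀ : E n} {ρ : ℝ}
    (hρ : 0 < ρ) (hx₀ : ‖x₀‖ + 3 * ρ ≤ 1) (hM : 0 < |u x₀|)
    (hb : ∀ x ∈ closedBall x₀ (2 * ρ), |u x| ≤ 2 * |u x₀|) (y : E n)
    (hy : ‖x₀ - y‖ ≤ ρ / (32 * n)) : |u x₀| / 2 ≤ |u y| := by
  have hn3 : (3 : ℝ) ≤ n := by exact_mod_cast hn
  have hy' : ‖x₀ - y‖ ≤ ρ / (2 * n) := hy.trans (by gcongr; norm_num)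
  have hlip : 16 * n * |u x₀| / ρ * ‖x₀ - y‖ ≤ |u x₀| / 2 := by
    calc 16 * n * |u x₀| / ρ * ‖x₀ - y‖ ≤ 16 * n * |u x₀| / ρ * (ρ / (32 * n)) := by gcongr
      _ = |u x₀| / 2 := by field_simp; norm_num
  rcases le_total 0 (u x₀) with h | h
  · have h1 := sub_le_of_HHarmonic hn hu hH hρ hx₀ hM hb y hy'
    have h2 := h1.trans hlip
    have h3 := abs_of_nonneg h
    linarith [le_abs_self (u y)]
  · have h1 := sub_le_of_HHarmonic hn hu.neg hH.neg hρ hx₀ hM (fun x hx => by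
      simpa using hb x hx) y hy'
    have h2 : -u x₀ - -u y ≤ |u x₀| / 2 := h1.trans hlip
    have h3 := abs_of_nonpos h
    linarith [neg_abs_le (u y)]

/-- The pointwise bound. For a point `a`, the maximum of `(ε - |x - a|)^{(n-1)/p} |u x|` over the
ball of radius `ε = (1 - |a|) / 2` about `a` is attained at some `x₀`; in a ball about `x₀` of radius
comparable to `d = ε - |x₀ - a|` the function is at most `2 |u x₀|`, hence by the gradient estimate
at least `|u x₀| / 2` in a smaller such ball. That ball meets a sphere about the origin in a cap of
measure comparable to `d^{n-1}`. -/
lemma exists_pointwise_bound (n : ℕ) (hn : 3 ≤ n) (p : ℝ) (hp : 0 < p) :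
    ∃ C : ℝ, 0 < C ∧ ∀ (u : E n → ℝ) (K : ℝ),
      ContDiffOn ℝ 2 u (ball (0 : E n) 1) → HHarmonic n u → 0 ≤ K →
      (∀ r ∈ Ioo (0 : ℝ) 1,
        (∫⁻ ζ, ENNReal.ofReal (|u (r • ζ)| ^ p) ∂(sphMeasure n)) ≤ ENNReal.ofReal (K ^ p)) →
      ∀ a ∈ ball (0 : E n) 1, |u a| ≤ C * K * (1 - ‖a‖) ^ (-((n : ℝ) - 1) / p) := by
  have hn3 : (3 : ℝ) ≤ n := by exact_mod_cast hn
  obtain ⟨c, hc, hcap⟩ := sph_cap_ge n (by omega)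
  obtain ⟨q, hq⟩ : ∃ q : ℝ, q = ((n : ℝ) - 1) / p := ⟨_, rfl⟩
  have hq0 : 0 < q := by rw [hq]; apply div_pos _ hp; linarith
  -- `θ` is chosen so that the weight varies at most by a factor `2` in the ball about `x₀`
  obtain ⟨θ, hθ⟩ : ∃ θ : ℝ, θ = (1 - (1 / 2 : ℝ) ^ (1 / q)) / 2 := ⟨_, rfl⟩
  have hhalf0 : 0 < (1 / 2 : ℝ) ^ (1 / q) := by positivity
  have hhalf1 : (1 / 2 : ℝ) ^ (1 / q) < 1 :=
    Real.rpow_lt_one (by norm_num) (by norm_num) (by positivity)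
  have hθ0 : 0 < θ := by rw [hθ]; linarith
  have hθ1 : θ < 1 / 2 := by rw [hθ]; linarith
  have hθq : (1 - 2 * θ) ^ q = 1 / 2 := by
    have : 1 - 2 * θ = (1 / 2 : ℝ) ^ (1 / q) := by rw [hθ]; ring
    rw [this, ← Real.rpow_mul (by norm_num), one_div_mul_cancel hq0.ne', Real.rpow_one]
  obtain ⟨γ, hγ⟩ : ∃ γ : ℝ, γ = θ / (64 * n) := ⟨_, rfl⟩
  have hγ0 : 0 < γ := by rw [hγ]; positivity
  obtain ⟨D, hD⟩ : ∃ D : ℝ, D = (c * γ ^ ((n : ℝ) - 1)) ^ (1 / p) := ⟨_, rfl⟩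
  have hD0 : 0 < D := by rw [hD]; positivity
  refine ⟨2 * D⁻¹ * 2 ^ q, by positivity, fun u K hu hH hK hint a ha => ?_⟩
  rw [mem_ball_zero_iff] at ha
  obtain ⟨ε, hε⟩ : ∃ ε : ℝ, ε = (1 - ‖a‖) / 2 := ⟨_, rfl⟩
  have hε0 : 0 < ε := by rw [hε]; linarith
  have hexp : (1 - ‖a‖) ^ (-((n : ℝ) - 1) / p) = (2 ^ q)⁻¹ * (ε ^ q)⁻¹ := by
    have h1 : -((n : ℝ) - 1) / p = -q := by rw [hq]; ring
    have h2 : 1 - ‖a‖ = 2 * ε := by rw [hε]; ring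
    rw [h1, h2, Real.rpow_neg (by positivity), Real.mul_rpow (by norm_num) hε0.le, mul_inv]
  suffices hmain : ε ^ q * |u a| ≤ 2 * D⁻¹ * K by
    rw [hexp]
    have h1 : 0 < ε ^ q := by positivity
    have h2 : (0 : ℝ) < 2 ^ q := by positivity
    have h3 : 2 * D⁻¹ * 2 ^ q * K * ((2 ^ q)⁻¹ * (ε ^ q)⁻¹) = (2 * D⁻¹ * K) / ε ^ q := by
      field_simp
    rw [h3, le_div_iff₀ h1, mul_comm]
    exact hmain
  have hsub : closedBall a ε ⊆ ball (0 : E n) 1 := by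
    intro x hx
    rw [mem_closedBall, dist_eq_norm] at hx
    rw [mem_ball_zero_iff]
    have : x = a + (x - a) := by abel
    rw [this]; linarith [norm_add_le a (x - a)]
  have hFc : ContinuousOn (fun x : E n => (ε - ‖x - a‖) ^ q * |u x|) (closedBall a ε) := by
    refine ContinuousOn.mul ?_ ((hu.continuousOn.mono hsub).abs)
    have : Continuous fun x : E n => ε - ‖x - a‖ := by fun_prop
    exact (this.rpow_const fun _ => Or.inr hq0.le).continuousOn
  obtain ⟨x₀, hx₀, hmax⟩ := (isCompact_closedBall a ε).exists_isMaxOn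
    ⟨a, mem_closedBall_self hε0.le⟩ hFc
  have hmax' : ∀ x ∈ closedBall a ε,
    (ε - ‖x - a‖) ^ q * |u x| ≤ (ε - ‖x₀ - a‖) ^ q * |u x₀| := hmax
  have hmaxa := hmax' a (mem_closedBall_self hε0.le)
  rw [sub_self, norm_zero, sub_zero] at hmaxa
  refine hmaxa.trans ?_
  rw [mem_closedBall, dist_eq_norm] at hx₀
  obtain ⟨d, hd⟩ : ∃ d : ℝ, d = ε - ‖x₀ - a‖ := ⟨_, rfl⟩
  rw [← hd] at hmax' ⊢
  have hd0' : 0 ≤ d := by rw [hd]; linarith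
  rcases hd0'.eq_or_lt with h | hd0
  · rw [← h, Real.zero_rpow hq0.ne', zero_mul]; positivity
  rcases (abs_nonneg (u x₀)).eq_or_lt with h | hM
  · rw [← h, mul_zero]; positivity
  have hdε : d ≤ ε := by rw [hd]; linarith [norm_nonneg (x₀ - a)]
  have hx₀n : ‖x₀‖ + 2 * d ≤ 1 := by
    have : x₀ = a + (x₀ - a) := by abel
    have h1 : ‖x₀‖ ≤ ‖a‖ + ‖x₀ - a‖ := by
      conv_lhs => rw [this]
      exact norm_add_le _ _
    have : ‖x₀ - a‖ = ε - d := by rw [hd]; ring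
    linarith
  have hb : ∀ x ∈ closedBall x₀ (2 * (θ * d)), |u x| ≤ 2 * |u x₀| := by
    intro x hx
    rw [mem_closedBall, dist_eq_norm] at hx
    have h1 : ‖x - a‖ ≤ 2 * (θ * d) + (ε - d) := by
      have : x - a = (x - x₀) + (x₀ - a) := by abel
      have h2 : ‖x₀ - a‖ = ε - d := by rw [hd]; ring
      rw [this]; linarith [norm_add_le (x - x₀) (x₀ - a)]
    have h2 : (1 - 2 * θ) * d ≤ ε - ‖x - a‖ := by linarith
    have h3 : 0 ≤ (1 - 2 * θ) * d := mul_nonneg (by linarith) hd0'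
    have h4 := hmax' x (by rw [mem_closedBall, dist_eq_norm]; linarith)
    have h5 : ((1 - 2 * θ) * d) ^ q * |u x| ≤ d ^ q * |u x₀| :=
      le_trans (by gcongr) h4
    rw [Real.mul_rpow (by linarith) hd0', hθq] at h5
    have h6 : 0 < d ^ q := by positivity
    have h7 : d ^ q * (|u x| / 2) ≤ d ^ q * |u x₀| := by linarith
    linarith [le_of_mul_le_mul_left h7 h6]
  have hlow := half_le_abs hn hu hH (mul_pos hθ0 hd0) (by nlinarith) hM hb
  have hγd : γ * d + γ * d = θ * d / (32 * n) := by rw [hγ]; field_simp; norm_num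
  have hd1 : d ≤ 1 / 2 := by linarith [norm_nonneg x₀]
  have hγ1 : γ < 1 := by
    rw [hγ, div_lt_one (by positivity)]; linarith
  have hγd0 : 0 < γ * d := by positivity
  have hγd1 : γ * d < 1 := by nlinarith
  obtain ⟨r, ζ, hr, hζ, hrζ⟩ : ∃ (r : ℝ) (ζ : E n), r ∈ Ioo (0 : ℝ) 1 ∧ ‖ζ‖ = 1 ∧
      ‖x₀ - r • ζ‖ ≤ γ * d := by
    by_cases h0 : x₀ = 0
    · refine ⟨γ * d, EuclideanSpace.single ⟨0, by omega⟩ 1, ⟨hγd0, hγd1⟩, by simp, ?_⟩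
      rw [h0, zero_sub, norm_neg, norm_smul, Real.norm_of_nonneg hγd0.le]
      simp
    · have h1 : 0 < ‖x₀‖ := norm_pos_iff.2 h0
      refine ⟨‖x₀‖, ‖x₀‖⁻¹ • x₀, ⟨h1, by linarith⟩, ?_, ?_⟩
      · rw [norm_smul, norm_inv, norm_norm, inv_mul_cancel₀ h1.ne']
      · rw [smul_smul, mul_inv_cancel₀ h1.ne', one_smul, sub_self, norm_zero]
        exact hγd0.le
  have hcap' : ∀ ζ' ∈ ball ζ (γ * d), |u x₀| / 2 ≤ |u (r • ζ')| := by
    intro ζ' hζ'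
    rw [mem_ball, dist_comm, dist_eq_norm] at hζ'
    apply hlow
    rw [← hγd]
    have h1 : x₀ - r • ζ' = (x₀ - r • ζ) + r • (ζ - ζ') := by rw [smul_sub]; abel
    rw [h1]
    refine (norm_add_le _ _).trans (add_le_add hrζ ?_)
    rw [norm_smul, Real.norm_of_nonneg hr.1.le]
    nlinarith [hr.2, norm_nonneg (ζ - ζ')]
  have h1 : ENNReal.ofReal ((|u x₀| / 2) ^ p * (c * (γ * d) ^ ((n : ℝ) - 1)))
      ≤ ENNReal.ofReal (K ^ p) := by
    rw [ENNReal.ofReal_mul (by positivity)]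
    calc ENNReal.ofReal ((|u x₀| / 2) ^ p) * ENNReal.ofReal (c * (γ * d) ^ ((n : ℝ) - 1))
        ≤ ENNReal.ofReal ((|u x₀| / 2) ^ p) * sphMeasure n (ball ζ (γ * d)) := by
          gcongr
          exact hcap ζ hζ _ hγd0 hγd1.le
      _ = ∫⁻ _ in ball ζ (γ * d), ENNReal.ofReal ((|u x₀| / 2) ^ p) ∂(sphMeasure n) := by
          rw [setLIntegral_const]
      _ ≤ ∫⁻ ζ' in ball ζ (γ * d), ENNReal.ofReal (|u (r • ζ')| ^ p) ∂(sphMeasure n) := by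
          refine setLIntegral_mono' measurableSet_ball fun ζ' hζ' => ?_
          gcongr
          exact hcap' ζ' hζ'
      _ ≤ _ := (setLIntegral_le_lintegral _ _).trans (hint r hr)
  have h2 : (|u x₀| / 2) ^ p * (c * (γ * d) ^ ((n : ℝ) - 1)) ≤ K ^ p :=
    (ENNReal.ofReal_le_ofReal_iff (by positivity)).1 h1
  have h3 : |u x₀| / 2 * (D * d ^ q) ≤ K := by
    have h4 := Real.rpow_le_rpow (by positivity) h2 (by positivity : 0 ≤ 1 / p)
    rw [← Real.rpow_mul hK, mul_one_div_cancel hp.ne', Real.rpow_one,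
      Real.mul_rpow (by positivity) (by positivity), ← Real.rpow_mul (by positivity),
      mul_one_div_cancel hp.ne', Real.rpow_one, Real.mul_rpow hγ0.le hd0', ← mul_assoc,
      Real.mul_rpow (x := c * _) (by positivity) (by positivity), ← hD,
      ← Real.rpow_mul hd0'] at h4
    rw [hq, div_eq_mul_one_div ((n : ℝ) - 1) p]
    exact h4
  have h4 : 2 * D⁻¹ * K = (2 * K) / D := by field_simp
  rw [h4, le_div_iff₀ hD0]
  linarith

/-! ### Integration over the sphere -/

lemma sph_finite (n : ℕ) (hn : 1 ≤ n) : IsFiniteMeasure (sphMeasure n) :=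
  ⟨by rw [sph_univ n hn]; exact ENNReal.one_lt_top⟩

lemma sph_integrable {n : ℕ} (hn : 1 ≤ n) {f : E n → ℝ}
    (hf : ContinuousOn f (sphere (0 : E n) 1)) : Integrable f (sphMeasure n) := by
  have := sph_finite n hn
  have h := hf.integrableOn_compact (μ := sphMeasure n) (isCompact_sphere 0 1)
  rwa [IntegrableOn, Measure.restrict_eq_self_of_ae_mem (sph_ae_mem n)] at h

/-- Differentiation under the integral over the sphere. -/
lemma sph_hasDerivAt {n : ℕ} (hn : 1 ≤ n) {f f' : ℝ → E n → ℝ} {t₀ ε : ℝ} (hε : 0 < ε)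
    (hc : ∀ t ∈ ball t₀ ε, ContinuousOn (f t) (sphere (0 : E n) 1))
    (hd : ∀ ζ ∈ sphere (0 : E n) 1, ∀ t ∈ ball t₀ ε, HasDerivAt (fun t => f t ζ) (f' t ζ) t)
    (hc' : ContinuousOn (fun z : ℝ × E n => f' z.1 z.2) (closedBall t₀ ε ×ˢ sphere (0 : E n) 1)) :
    HasDerivAt (fun t => ∫ ζ, f t ζ ∂(sphMeasure n)) (∫ ζ, f' t₀ ζ ∂(sphMeasure n)) t₀ := by
  have := sph_finite n hn
  obtain ⟨b, hb⟩ := ((isCompact_closedBall t₀ ε).prod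
    (isCompact_sphere (0 : E n) 1)).exists_bound_of_continuousOn hc'
  have hslice : ContinuousOn (f' t₀) (sphere (0 : E n) 1) := by
    have h2 : ContinuousOn (fun ζ : E n => (t₀, ζ)) (sphere (0 : E n) 1) := by fun_prop
    exact hc'.comp h2 fun ζ hζ => ⟨mem_closedBall_self hε.le, hζ⟩
  refine (hasDerivAt_integral_of_dominated_loc_of_deriv_le (bound := fun _ => b)
    (ball_mem_nhds t₀ hε) ?_ (sph_integrable hn (hc t₀ (mem_ball_self hε)))
    (sph_integrable hn hslice).aestronglyMeasurable ?_ (integrable_const b) ?_).2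
  · filter_upwards [ball_mem_nhds t₀ hε] with t ht
    exact (sph_integrable hn (hc t ht)).aestronglyMeasurable
  · filter_upwards [sph_ae_mem n] with ζ hζ t ht
    exact hb (t, ζ) ⟨ball_subset_closedBall ht, hζ⟩
  · filter_upwards [sph_ae_mem n] with ζ hζ t ht using hd ζ hζ t ht

/-- The derivative of `u` along the linear vector field `x ↦ A x`. -/
def vf {n : ℕ} (A : E n →L[ℝ] E n) (u : E n → ℝ) (x : E n) : ℝ := fderiv ℝ u x (A x)

lemma vf_contDiffOn {n : ℕ} {A : E n →L[ℝ] E n} {u : E n → ℝ} {s : Set (E n)} (hs : IsOpen s)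
    {j k : ℕ∞ω} (hu : ContDiffOn ℝ j u s) (hjk : k + 1 ≤ j) : ContDiffOn ℝ k (vf A u) s :=
  (hu.fderiv_of_isOpen hs hjk).clm_apply A.contDiff.contDiffOn

lemma vf_contDiff {n : ℕ} {A : E n →L[ℝ] E n} {Φ : E n → ℝ} (h : ContDiff ℝ ∞ Φ) :
    ContDiff ℝ ∞ (vf A Φ) :=
  (h.fderiv_right (m := ∞) (by norm_num)).clm_apply A.contDiff

lemma vf_vf {n : ℕ} (A : E n →L[ℝ] E n) {u : E n → ℝ} {x : E n} (hu : ContDiffAt ℝ 2 u x) :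
    vf A (vf A u) x = hess n u x (A x) (A x) + fderiv ℝ u x (A (A x)) := by
  have h1 : DifferentiableAt ℝ (fderiv ℝ u) x :=
    (hu.fderiv_right (m := 1) (by norm_num)).differentiableAt one_ne_zero
  have h2 := h1.hasFDerivAt.clm_apply A.hasFDerivAt
  have h3 : fderiv ℝ (vf A u) x = _ := h2.fderiv
  rw [vf, h3]
  simp [add_comm]

lemma smul_mem_ball {n : ℕ} {r : ℝ} (hr : r ∈ Ioo (0 : ℝ) 1) {ζ : E n}
    (hζ : ζ ∈ sphere (0 : E n) 1) : r • ζ ∈ ball (0 : E n) 1 := by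
  rw [mem_sphere_zero_iff_norm] at hζ
  rw [mem_ball_zero_iff, norm_smul, hζ, mul_one, Real.norm_of_nonneg hr.1.le]
  exact hr.2

lemma continuousOn_pairing {n : ℕ} {g : E n → ℝ} (hg : ContinuousOn g (ball (0 : E n) 1))
    {Φ : E n → ℝ} (hΦ : Continuous Φ) {r : ℝ} (hr : r ∈ Ioo (0 : ℝ) 1) :
    ContinuousOn (fun ζ => g (r • ζ) * Φ ζ) (sphere (0 : E n) 1) :=
  (hg.comp (by fun_prop) fun _ hζ => smul_mem_ball hr hζ).mul hΦ.continuousOn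

/-- The radial derivative of a pairing is `r⁻¹` times the pairing of the normal derivative. -/
lemma pairing_hasDerivAt {n : ℕ} (hn : 1 ≤ n) {g : E n → ℝ}
    (hg : ContDiffOn ℝ 1 g (ball (0 : E n) 1)) {Φ : E n → ℝ} (hΦ : Continuous Φ) {r : ℝ}
    (hr : r ∈ Ioo (0 : ℝ) 1) :
    HasDerivAt (fun r : ℝ => ∫ ζ, g (r • ζ) * Φ ζ ∂(sphMeasure n))
      ((∫ ζ, vf (.id ℝ (E n)) g (r • ζ) * Φ ζ ∂(sphMeasure n)) / r) r := by
  obtain ⟨ε, hε, hball⟩ := Metric.nhds_basis_closedBall.mem_iff.1 (isOpen_Ioo.mem_nhds hr)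
  have h := sph_hasDerivAt hn (f := fun t ζ => g (t • ζ) * Φ ζ)
    (f' := fun t ζ => fderiv ℝ g (t • ζ) ζ * Φ ζ) hε
    (fun t ht => continuousOn_pairing hg.continuousOn hΦ (hball (ball_subset_closedBall ht))) ?_ ?_
  · refine h.congr_deriv ?_
    rw [← integral_div]
    refine integral_congr_ae (Eventually.of_forall fun ζ => ?_)
    simp only [vf, ContinuousLinearMap.id_apply, map_smul, smul_eq_mul]
    field_simp [hr.1.ne']
  · intro ζ hζ t ht
    have h1 : DifferentiableAt ℝ g (t • ζ) :=
      (hg.contDiffAt (isOpen_ball.mem_nhds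
        (smul_mem_ball (hball (ball_subset_closedBall ht)) hζ))).differentiableAt one_ne_zero
    have h2 : HasDerivAt (fun t : ℝ => t • ζ) ζ t := by
      simpa using (hasDerivAt_id t).smul_const ζ
    exact (h1.hasFDerivAt.comp_hasDerivAt t h2).mul_const _
  · have h1 : ContinuousOn (fderiv ℝ g) (ball (0 : E n) 1) :=
      hg.continuousOn_fderiv_of_isOpen isOpen_ball le_rfl
    have h2 : ContinuousOn (fun z : ℝ × E n => fderiv ℝ g (z.1 • z.2))
        (closedBall r ε ×ˢ sphere (0 : E n) 1) :=
      h1.comp (f := fun z : ℝ × E n => z.1 • z.2) (by fun_prop)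
        fun z hz => smul_mem_ball (hball hz.1) hz.2
    exact (h2.clm_apply continuousOn_snd).mul (hΦ.comp continuous_snd).continuousOn

/-- Integration by parts for an infinitesimal rotation `A`: by invariance of the surface
measure, `∫ g (r R_t ζ) Φ (R_t ζ)` does not depend on `t`, where `R_t = exp (t A)`. -/
lemma pairing_rotation {n : ℕ} (hn : 1 ≤ n) {A : E n →L[ℝ] E n}
    (hA : A ∈ skewAdjoint (E n →L[ℝ] E n)) {g : E n → ℝ}
    (hg : ContDiffOn ℝ 1 g (ball (0 : E n) 1)) {Φ : E n → ℝ} (hΦ : ContDiff ℝ 1 Φ) {r : ℝ}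
    (hr : r ∈ Ioo (0 : ℝ) 1) :
    ∫ ζ, vf A g (r • ζ) * Φ ζ ∂(sphMeasure n) = -∫ ζ, g (r • ζ) * vf A Φ ζ ∂(sphMeasure n) := by
  let R : ℝ → E n →L[ℝ] E n := fun t => NormedSpace.exp (t • A)
  have hR : ∀ t, HasDerivAt R (A * R t) t := fun t => hasDerivAt_exp_smul_const' A t
  have hRc : Continuous R := continuous_iff_continuousAt.2 fun t => (hR t).continuousAt
  have hU : ∀ t, R t ∈ unitary (E n →L[ℝ] E n) := fun t =>
    let : NormedAlgebra ℚ (E n →L[ℝ] E n) := NormedAlgebra.restrictScalars ℚ ℝ _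
    NormedSpace.exp_mem_unitary_of_mem_skewAdjoint (skewAdjoint.smul_mem t hA)
  have hpres : ∀ t, MeasurePreserving (R t) (sphMeasure n) (sphMeasure n) := fun t =>
    sph_map n (Unitary.linearIsometryEquiv ⟨R t, hU t⟩)
  have hRs : ∀ t, ∀ ζ ∈ sphere (0 : E n) 1, R t ζ ∈ sphere (0 : E n) 1 := by
    intro t ζ hζ
    rw [mem_sphere_zero_iff_norm] at hζ ⊢
    rw [← hζ]
    exact (Unitary.linearIsometryEquiv ⟨R t, hU t⟩).norm_map ζ
  have hR0 : ∀ ζ, R 0 ζ = ζ := fun ζ => by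
    show NormedSpace.exp ((0 : ℝ) • A) ζ = ζ
    have h0 : (0 : ℝ) • A = 0 := by ext; simp
    rw [h0, NormedSpace.exp_zero]; rfl
  have hpair := continuousOn_pairing hg.continuousOn hΦ.continuous hr
  have h := sph_hasDerivAt hn (t₀ := 0) (f := fun t ζ => g (r • R t ζ) * Φ (R t ζ))
    (f' := fun t ζ => vf A g (r • R t ζ) * Φ (R t ζ) + g (r • R t ζ) * vf A Φ (R t ζ)) one_pos
    (fun t _ => hpair.comp (R t).continuous.continuousOn (hRs t)) ?_ ?_
  · have hconst : ∀ t, ∫ ζ, g (r • R t ζ) * Φ (R t ζ) ∂(sphMeasure n)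
        = ∫ ζ, g (r • ζ) * Φ ζ ∂(sphMeasure n) := fun t =>
      (hpres t).integral_comp (Unitary.linearIsometryEquiv ⟨R t, hU t⟩).toHomeomorph.measurableEmbedding
        (fun ζ => g (r • ζ) * Φ ζ)
    simp only [hconst, hR0] at h
    have h0 := h.unique (hasDerivAt_const _ _)
    have hvg : ContinuousOn (vf A g) (ball (0 : E n) 1) :=
      (vf_contDiffOn (k := 0) isOpen_ball hg (by norm_num)).continuousOn
    have hvΦ : Continuous (vf A Φ) :=
      (hΦ.continuous_fderiv one_ne_zero).clm_apply A.continuous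
    rw [integral_add (sph_integrable hn (continuousOn_pairing hvg hΦ.continuous hr))
      (sph_integrable hn (continuousOn_pairing hg.continuousOn hvΦ hr))] at h0
    linarith
  · intro ζ hζ t _
    have h1 : HasDerivAt (fun t => R t ζ) (A (R t ζ)) t := by
      simpa using (hR t).clm_apply (hasDerivAt_const t ζ)
    have h2 : DifferentiableAt ℝ g (r • R t ζ) :=
      (hg.contDiffAt (isOpen_ball.mem_nhds
        (smul_mem_ball hr (hRs t ζ hζ)))).differentiableAt one_ne_zero
    have h3 : DifferentiableAt ℝ Φ (R t ζ) := hΦ.differentiable one_ne_zero _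
    have h4 := (h2.hasFDerivAt.comp_hasDerivAt t (h1.const_smul r)).mul
      (h3.hasFDerivAt.comp_hasDerivAt t h1)
    exact h4.congr_deriv (by simp [vf])
  · have hev : Continuous fun z : ℝ × E n => R z.1 z.2 :=
      (hRc.comp continuous_fst).clm_apply continuous_snd
    have hvg : ContinuousOn (vf A g) (ball (0 : E n) 1) :=
      (vf_contDiffOn (k := 0) isOpen_ball hg (by norm_num)).continuousOn
    have hvΦ : Continuous (vf A Φ) :=
      (hΦ.continuous_fderiv one_ne_zero).clm_apply A.continuous
    have hmaps : MapsTo (fun z : ℝ × E n => R z.1 z.2) (closedBall 0 1 ×ˢ sphere (0 : E n) 1)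
        (sphere (0 : E n) 1) := fun z hz => hRs z.1 z.2 hz.2
    exact ((continuousOn_pairing hvg hΦ.continuous hr).comp hev.continuousOn hmaps).add
      ((continuousOn_pairing hg.continuousOn hvΦ hr).comp hev.continuousOn hmaps)

/-- The generator `x ↦ x_i e_j - x_j e_i` of the rotations in the `(i, j)`-plane. -/
def rot {n : ℕ} (i j : Fin n) : E n →L[ℝ] E n :=
  (EuclideanSpace.proj i : E n →L[ℝ] ℝ).smulRight (EuclideanSpace.single j (1 : ℝ))
    - (EuclideanSpace.proj j : E n →L[ℝ] ℝ).smulRight (EuclideanSpace.single i (1 : ℝ))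

lemma rot_apply {n : ℕ} (i j : Fin n) (x : E n) : rot i j x =
    x i • EuclideanSpace.single j (1 : ℝ) - x j • EuclideanSpace.single i (1 : ℝ) := by
  simp [rot]

lemma rot_skew {n : ℕ} (i j : Fin n) : rot i j ∈ skewAdjoint (E n →L[ℝ] E n) := by
  rw [skewAdjoint.mem_iff, ContinuousLinearMap.star_eq_adjoint, eq_comm,
    ContinuousLinearMap.eq_adjoint_iff]
  intro x y
  simp only [neg_apply, rot_apply, inner_neg_left, inner_sub_left, inner_sub_right,
    inner_smul_left, inner_smul_right, EuclideanSpace.inner_single_left,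
    EuclideanSpace.inner_single_right]
  simp
  ring

/-- The spherical Laplacian, as (half) the sum of squares of the generators of rotations. -/
def sphLap {n : ℕ} (u : E n → ℝ) (x : E n) : ℝ :=
  (∑ i : Fin n, ∑ j : Fin n, vf (rot i j) (vf (rot i j) u) x) / 2

lemma sphLap_contDiff {n : ℕ} {Φ : E n → ℝ} (h : ContDiff ℝ ∞ Φ) : ContDiff ℝ ∞ (sphLap Φ) :=
  (ContDiff.sum fun _ _ => ContDiff.sum fun _ _ => vf_contDiff (vf_contDiff h)).div_const 2

/-- The Laplacian in polar coordinates. -/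
lemma sphLap_eq {n : ℕ} {u : E n → ℝ} {x : E n} (hu : ContDiffAt ℝ 2 u x) :
    sphLap u x = ‖x‖ ^ 2 * lap n u x - vf (.id ℝ (E n)) (vf (.id ℝ (E n)) u) x
      - ((n : ℝ) - 2) * vf (.id ℝ (E n)) u x := by
  have hN2 : vf (.id ℝ (E n)) (vf (.id ℝ (E n)) u) x = hess n u x x x + fderiv ℝ u x x := by
    rw [vf_vf _ hu]; simp
  have hN : vf (.id ℝ (E n)) u x = fderiv ℝ u x x := by simp [vf]
  rw [hN2, hN, lap_eq_sum_hess hu, sphLap]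
  simp only [vf_vf _ hu]
  obtain ⟨H, hH⟩ : ∃ H, H = hess n u x := ⟨_, rfl⟩
  obtain ⟨ℓ, hℓ⟩ : ∃ ℓ, ℓ = fderiv ℝ u x := ⟨_, rfl⟩
  rw [← hH, ← hℓ]
  have hsum1 : ∀ i j, H (rot i j x) (rot i j x) =
      (x i * x i) * H (EuclideanSpace.single j 1) (EuclideanSpace.single j 1)
      + (x j * x j) * H (EuclideanSpace.single i 1) (EuclideanSpace.single i 1)
      - x i * (x j * H (EuclideanSpace.single j 1) (EuclideanSpace.single i 1))
      - x i * (x j * H (EuclideanSpace.single i 1) (EuclideanSpace.single j 1)) := by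
    intro i j
    simp only [rot_apply, map_sub, map_smul, sub_apply, smul_apply, smul_eq_mul]
    ring
  have hsum2 : ∀ i j, ℓ (rot i j (rot i j x)) =
      (if i = j then 2 * (x i * ℓ (EuclideanSpace.single i 1)) else 0)
      - x i * ℓ (EuclideanSpace.single i 1) - x j * ℓ (EuclideanSpace.single j 1) := by
    intro i j
    by_cases hij : i = j
    · subst hij
      simp [rot_apply]
      ring
    · have hji : j ≠ i := fun h => hij h.symm
      simp only [rot_apply, map_sub, map_smul, smul_eq_mul]
      simp [hij, hji]
  have hsq : ∑ i, x i * x i = ‖x‖ ^ 2 := by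
    rw [EuclideanSpace.real_norm_sq_eq]; simp [sq]
  have hl : ∑ i, x i * ℓ (EuclideanSpace.single i 1) = ℓ x := by
    conv_rhs => rw [← sum_coord_smul_single x]
    simp [map_sum]
  have hr1 : ∀ v, ∑ j, x j * H v (EuclideanSpace.single j 1) = H v x := by
    intro v
    conv_rhs => arg 2; rw [← sum_coord_smul_single x]
    simp [map_sum]
  have hr2 : ∀ v, ∑ j, x j * H (EuclideanSpace.single j 1) v = H x v := by
    intro v
    conv_rhs => arg 1; rw [← sum_coord_smul_single x]
    simp [map_sum]
  simp only [hsum1, hsum2, Finset.sum_add_distrib, Finset.sum_sub_distrib, ← Finset.mul_sum,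
    ← Finset.sum_mul, hr1, hr2, hl, hsq, Finset.sum_ite_eq, Finset.mem_univ, if_true,
    Finset.sum_const, Finset.card_univ, Fintype.card_fin, nsmul_eq_mul]
  simp only [mul_left_comm _ (n : ℝ), ← Finset.mul_sum, hl]
  ring

/-- The spherical Laplacian is symmetric. -/
lemma pairing_sphLap {n : ℕ} (hn : 1 ≤ n) {u : E n → ℝ}
    (hu : ContDiffOn ℝ 2 u (ball (0 : E n) 1)) {Φ : E n → ℝ} (hΦ : ContDiff ℝ ∞ Φ) {r : ℝ}
    (hr : r ∈ Ioo (0 : ℝ) 1) :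
    ∫ ζ, sphLap u (r • ζ) * Φ ζ ∂(sphMeasure n)
      = ∫ ζ, u (r • ζ) * sphLap Φ ζ ∂(sphMeasure n) := by
  have hv1 : ∀ A : E n →L[ℝ] E n, ContDiffOn ℝ 1 (vf A u) (ball (0 : E n) 1) := fun A =>
    vf_contDiffOn isOpen_ball hu (by norm_num)
  have hv2 : ∀ A : E n →L[ℝ] E n, ContinuousOn (vf A (vf A u)) (ball (0 : E n) 1) := fun A =>
    (vf_contDiffOn (k := 0) isOpen_ball (hv1 A) (by norm_num)).continuousOn
  have h1 : ∀ i j : Fin n, ∫ ζ, vf (rot i j) (vf (rot i j) u) (r • ζ) * Φ ζ ∂(sphMeasure n)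
      = ∫ ζ, u (r • ζ) * vf (rot i j) (vf (rot i j) Φ) ζ ∂(sphMeasure n) := by
    intro i j
    rw [pairing_rotation hn (rot_skew i j) (hv1 _) (hΦ.of_le (by norm_num)) hr,
      pairing_rotation hn (rot_skew i j) (hu.of_le (by norm_num))
        ((vf_contDiff hΦ).of_le (by norm_num)) hr, neg_neg]
  have h2 : (fun ζ => sphLap u (r • ζ) * Φ ζ) = fun ζ =>
      (∑ i : Fin n, ∑ j : Fin n, vf (rot i j) (vf (rot i j) u) (r • ζ) * Φ ζ) / 2 := by
    funext ζ
    simp only [sphLap, ← Finset.sum_mul]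
    ring
  have h3 : (fun ζ => u (r • ζ) * sphLap Φ ζ) = fun ζ =>
      (∑ i : Fin n, ∑ j : Fin n, u (r • ζ) * vf (rot i j) (vf (rot i j) Φ) ζ) / 2 := by
    funext ζ
    simp only [sphLap, ← Finset.mul_sum]
    ring
  rw [h2, h3, integral_div, integral_div]
  have hi1 : ∀ i j : Fin n, Integrable
      (fun ζ => vf (rot i j) (vf (rot i j) u) (r • ζ) * Φ ζ) (sphMeasure n) := fun i j =>
    sph_integrable hn (continuousOn_pairing (hv2 _) hΦ.continuous hr)
  have hi2 : ∀ i j : Fin n, Integrable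
      (fun ζ => u (r • ζ) * vf (rot i j) (vf (rot i j) Φ) ζ) (sphMeasure n) := fun i j =>
    sph_integrable hn (continuousOn_pairing hu.continuousOn
      (vf_contDiff (vf_contDiff hΦ)).continuous hr)
  rw [integral_finsetSum _ fun i _ => integrable_finsetSum _ fun j _ => hi1 i j,
    integral_finsetSum _ fun i _ => integrable_finsetSum _ fun j _ => hi2 i j]
  congr 1
  refine Finset.sum_congr rfl fun i _ => ?_
  rw [integral_finsetSum _ fun j _ => hi1 i j, integral_finsetSum _ fun j _ => hi2 i j]
  exact Finset.sum_congr rfl fun j _ => h1 i j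

/-! ### The radial differential equation -/

/-- If a derivative blows up at `1` like `(1 - t)^{-(q + 2)}`, the function grows at most like
`(1 - t)^{-(q + 1)}`. -/
lemma growth_of_deriv {h h' : ℝ → ℝ} {q : ℕ} {D : ℝ} (hD : 0 ≤ D)
    (hd : ∀ t ∈ Ico (1 / 2 : ℝ) 1, HasDerivAt h (h' t) t)
    (hb : ∀ t ∈ Ico (1 / 2 : ℝ) 1, |h' t| ≤ D * ((1 - t) ^ (q + 2))⁻¹) :
    ∀ r ∈ Ico (1 / 2 : ℝ) 1, |h r| ≤ (|h (1 / 2)| + D) * ((1 - r) ^ (q + 1))⁻¹ := by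
  intro r hr
  have hB : ∀ t ∈ Ico (1 / 2 : ℝ) 1,
      HasDerivAt (fun t => |h (1 / 2)| + D * ((1 - t) ^ (q + 1))⁻¹)
        (D * ((q + 1 : ℝ) * ((1 - t) ^ (q + 2))⁻¹)) t := by
    intro t ht
    have h1 : (0 : ℝ) < 1 - t := by linarith [ht.2]
    have h2 : HasDerivAt (fun t : ℝ => (1 - t) ^ (q + 1)) (-((q + 1 : ℝ) * (1 - t) ^ q)) t := by
      have := ((hasDerivAt_id t).const_sub 1).fun_pow (q + 1)
      simpa using this
    refine (((h2.inv (pow_pos h1 _).ne').const_mul D).const_add _).congr_deriv ?_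
    field_simp
    ring
  have hsub : ∀ t ∈ Icc (1 / 2) r, t ∈ Ico (1 / 2 : ℝ) 1 := fun t ht =>
    ⟨ht.1, ht.2.trans_lt hr.2⟩
  have hmain := image_norm_le_of_norm_deriv_right_le_deriv_boundary' (a := 1 / 2) (b := r)
    (f := h) (f' := h') (B := fun t => |h (1 / 2)| + D * ((1 - t) ^ (q + 1))⁻¹)
    (B' := fun t => D * ((q + 1 : ℝ) * ((1 - t) ^ (q + 2))⁻¹))
    (fun t ht => (hd t (hsub t ht)).continuousAt.continuousWithinAt)
    (fun t ht => (hd t (hsub t (Ico_subset_Icc_self ht))).hasDerivWithinAt) ?_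
    (fun t ht => (hB t (hsub t ht)).continuousAt.continuousWithinAt)
    (fun t ht => (hB t (hsub t (Ico_subset_Icc_self ht))).hasDerivWithinAt) ?_
    (right_mem_Icc.2 hr.1)
  · have h1 : (0 : ℝ) < 1 - r := by linarith [hr.2]
    have h2 : (1 : ℝ) ≤ ((1 - r) ^ (q + 1))⁻¹ :=
      (one_le_inv₀ (pow_pos h1 _)).2 (pow_le_one₀ h1.le (by linarith [hr.1]))
    rw [Real.norm_eq_abs] at hmain
    nlinarith [abs_nonneg (h (1 / 2))]
  · have : (0 : ℝ) ≤ D * ((1 - 1 / 2 : ℝ) ^ (q + 1))⁻¹ := by norm_num; positivity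
    simpa using this
  · intro t ht
    have ht' := hsub t (Ico_subset_Icc_self ht)
    have h1 : (0 : ℝ) < 1 - t := by linarith [ht'.2]
    refine (hb t ht').trans (mul_le_mul_of_nonneg_left ?_ hD)
    have h2 : (0 : ℝ) ≤ ((1 - t) ^ (q + 2))⁻¹ := by positivity
    nlinarith [(Nat.cast_nonneg q : (0 : ℝ) ≤ q)]

/-- The integrating factor of the radial equation is `(r / (1 - r²)) ^ m`; it converts growth of
order `k + 1` of the right-hand side into growth of order `k` of the solution. -/
lemma ode_bound {m k : ℕ} {f g : ℝ → ℝ} {C : ℝ} (hC : 0 ≤ C)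
    (hf : ∀ r ∈ Ioo (0 : ℝ) 1,
      HasDerivAt f (-((m + 1 : ℝ) * f r * ((1 + r ^ 2) / (1 - r ^ 2)) + g r) / r) r)
    (hg : ∀ r ∈ Ico (1 / 2 : ℝ) 1, |g r| ≤ C * ((1 - r) ^ (k + 1))⁻¹) :
    ∃ C', 0 ≤ C' ∧ ∀ r ∈ Ico (1 / 2 : ℝ) 1, |f r| ≤ C' * ((1 - r) ^ k)⁻¹ := by
  have hw : ∀ r ∈ Ico (1 / 2 : ℝ) 1, HasDerivAt (fun r : ℝ => r / (1 - r ^ 2))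
      ((1 + r ^ 2) / (1 - r ^ 2) ^ 2) r := by
    intro r hr
    have h1 : (0 : ℝ) < 1 - r ^ 2 := by nlinarith [hr.1, hr.2]
    have h2 : HasDerivAt (fun r : ℝ => 1 - r ^ 2) (-(2 * r)) r := by
      simpa using ((hasDerivAt_id r).pow 2).const_sub 1
    refine ((hasDerivAt_id r).div h2 h1.ne').congr_deriv ?_
    simp only [id]
    congr 1
    ring
  have hd : ∀ r ∈ Ico (1 / 2 : ℝ) 1, HasDerivAt (fun r => (r / (1 - r ^ 2)) ^ (m + 1) * f r)
      (-((r / (1 - r ^ 2)) ^ (m + 1) * g r / r)) r := by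
    intro r hr
    have h0 : (0 : ℝ) < r := by linarith [hr.1]
    have h1 : (0 : ℝ) < 1 - r ^ 2 := by nlinarith [hr.1, hr.2]
    refine (((hw r hr).pow (m + 1)).mul (hf r ⟨h0, hr.2⟩)).congr_deriv ?_
    simp only [Nat.add_sub_cancel, pow_succ, Nat.cast_add, Nat.cast_one, Pi.pow_apply]
    generalize (r / (1 - r ^ 2)) ^ m = w
    field_simp
    ring
  have hwle : ∀ r ∈ Ico (1 / 2 : ℝ) 1, r / (1 - r ^ 2) ≤ (1 - r)⁻¹ := by
    intro r hr
    have h1 : (0 : ℝ) < 1 - r ^ 2 := by nlinarith [hr.1, hr.2]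
    have h2 : (0 : ℝ) < 1 - r := by linarith [hr.2]
    rw [inv_eq_one_div, div_le_div_iff₀ h1 h2]
    nlinarith [hr.1]
  -- `r ≥ 1 / 2` gives `(1 + r) / r ≤ 3`
  have hwge : ∀ r ∈ Ico (1 / 2 : ℝ) 1, (4 * (1 - r))⁻¹ ≤ r / (1 - r ^ 2) := by
    intro r hr
    have h1 : (0 : ℝ) < 1 - r ^ 2 := by nlinarith [hr.1, hr.2]
    have h2 : (0 : ℝ) < 1 - r := by linarith [hr.2]
    rw [inv_eq_one_div, div_le_div_iff₀ (by positivity) h1]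
    nlinarith [hr.1, mul_nonneg h2.le (by linarith [hr.1] : (0 : ℝ) ≤ 3 * r - 1)]
  have hb : ∀ r ∈ Ico (1 / 2 : ℝ) 1, |(-((r / (1 - r ^ 2)) ^ (m + 1) * g r / r))|
      ≤ (2 * C) * ((1 - r) ^ (m + k + 2))⁻¹ := by
    intro r hr
    have h0 : (0 : ℝ) < r := by linarith [hr.1]
    have h1 : (0 : ℝ) < 1 - r ^ 2 := by nlinarith [hr.1, hr.2]
    have h2 : (0 : ℝ) < 1 - r := by linarith [hr.2]
    have h3 : (r / (1 - r ^ 2)) ^ (m + 1) ≤ ((1 - r)⁻¹) ^ (m + 1) :=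
      pow_le_pow_left₀ (by positivity) (hwle r hr) _
    rw [abs_neg, abs_div, abs_mul, abs_of_pos h0, abs_of_nonneg (a := (r / (1 - r ^ 2)) ^ (m + 1))
      (by positivity), div_le_iff₀ h0]
    have h4 := mul_le_mul h3 (hg r hr) (abs_nonneg _) (by positivity)
    have h5 : ((1 - r)⁻¹) ^ (m + 1) * (C * ((1 - r) ^ (k + 1))⁻¹)
        = C * ((1 - r) ^ (m + k + 2))⁻¹ := by
      rw [inv_pow, show m + k + 2 = (m + 1) + (k + 1) by ring, pow_add (1 - r) (m + 1), mul_inv]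
      ring
    have h6 : 0 ≤ C * ((1 - r) ^ (m + k + 2))⁻¹ := by positivity
    nlinarith [hr.1]
  have hmain := growth_of_deriv (by positivity) hd hb
  refine ⟨(|(1 / 2 / (1 - (1 / 2 : ℝ) ^ 2)) ^ (m + 1) * f (1 / 2)| + 2 * C) * 4 ^ (m + 1),
    by positivity, fun r hr => ?_⟩
  have h0 : (0 : ℝ) < r := by linarith [hr.1]
  have h1 : (0 : ℝ) < 1 - r ^ 2 := by nlinarith [hr.1, hr.2]
  have h2 : (0 : ℝ) < 1 - r := by linarith [hr.2]
  have h3 := hmain r hr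
  set A := |(1 / 2 / (1 - (1 / 2 : ℝ) ^ 2)) ^ (m + 1) * f (1 / 2)| + 2 * C with hA
  have h4 : ((4 * (1 - r))⁻¹) ^ (m + 1) ≤ (r / (1 - r ^ 2)) ^ (m + 1) :=
    pow_le_pow_left₀ (by positivity) (hwge r hr) _
  rw [abs_mul, abs_of_nonneg (a := (r / (1 - r ^ 2)) ^ (m + 1)) (by positivity)] at h3
  have h5 := (mul_le_mul_of_nonneg_right h4 (abs_nonneg (f r))).trans h3
  rw [inv_pow, inv_mul_le_iff₀ (by positivity)] at h5
  refine h5.trans_eq ?_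
  rw [show m + k + 1 = (m + 1) + k by ring, pow_add (1 - r) (m + 1), mul_inv, mul_pow]
  field_simp

/-- The radial differential equation satisfied by the pairing of an `H`-harmonic function with
`Φ`: the spherical part of the operator is moved onto `Φ`. -/
lemma pairing_ode {n : ℕ} (hn : 1 ≤ n) {u : E n → ℝ}
    (hu : ContDiffOn ℝ 2 u (ball (0 : E n) 1)) (hH : HHarmonic n u) {Φ : E n → ℝ}
    (hΦ : ContDiff ℝ ∞ Φ) {r : ℝ} (hr : r ∈ Ioo (0 : ℝ) 1) :
    HasDerivAt (fun r : ℝ => ∫ ζ, vf (.id ℝ (E n)) u (r • ζ) * Φ ζ ∂(sphMeasure n))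
      (-(((n : ℝ) - 2) * (∫ ζ, vf (.id ℝ (E n)) u (r • ζ) * Φ ζ ∂(sphMeasure n))
          * ((1 + r ^ 2) / (1 - r ^ 2))
        + ∫ ζ, u (r • ζ) * sphLap Φ ζ ∂(sphMeasure n)) / r) r := by
  have hN : ContDiffOn ℝ 1 (vf (.id ℝ (E n)) u) (ball (0 : E n) 1) :=
    vf_contDiffOn isOpen_ball hu (by norm_num)
  have hvv : ∀ A : E n →L[ℝ] E n, ContinuousOn (vf A (vf A u)) (ball (0 : E n) 1) := fun A =>
    (vf_contDiffOn (k := 0) isOpen_ball (vf_contDiffOn (k := 1) isOpen_ball hu (by norm_num))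
      (by norm_num)).continuousOn
  have hS : ContinuousOn (sphLap u) (ball (0 : E n) 1) :=
    (continuousOn_finsetSum _ fun _ _ => continuousOn_finsetSum _ fun _ _ => hvv _).div_const 2
  refine (pairing_hasDerivAt hn hN hΦ.continuous hr).congr_deriv ?_
  congr 1
  rw [← pairing_sphLap hn hu hΦ hr, mul_right_comm, ← integral_const_mul, ← integral_add
    ((sph_integrable hn (continuousOn_pairing hN.continuousOn hΦ.continuous hr)).const_mul _)
    (sph_integrable hn (continuousOn_pairing hS hΦ.continuous hr)), ← integral_neg]
  refine integral_congr_ae ?_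
  filter_upwards [sph_ae_mem n] with ζ hζ
  have hx := smul_mem_ball hr hζ
  have h1 := sphLap_eq (hu.contDiffAt (isOpen_ball.mem_nhds hx))
  have h2 := hH _ hx
  have hnorm : ‖r • ζ‖ = r := by
    rw [mem_sphere_zero_iff_norm] at hζ
    rw [norm_smul, hζ, mul_one, Real.norm_of_nonneg hr.1.le]
  have h3 : Nder n u (r • ζ) = vf (.id ℝ (E n)) u (r • ζ) := by simp [Nder, vf]
  rw [hnorm, h3] at h2
  rw [hnorm] at h1
  have h4 : (0 : ℝ) < 1 - r ^ 2 := by nlinarith [hr.1, hr.2]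
  have h5 : (1 - r ^ 2) * lap n u (r • ζ) = -(2 * ((n : ℝ) - 2) * vf (.id ℝ (E n)) u (r • ζ)) :=
    mul_left_cancel₀ h4.ne' (by linear_combination h2)
  have h6 : lap n u (r • ζ) =
      -(2 * ((n : ℝ) - 2) * vf (.id ℝ (E n)) u (r • ζ)) / (1 - r ^ 2) := by
    rw [eq_div_iff h4.ne']; linarith
  rw [h6] at h1
  rw [h1]
  field_simp
  ring

/-! ### Existence of the boundary distribution -/

/-- An `H`-harmonic function of polynomial growth has a boundary distribution: if all its
pairings grow like `(1 - r)^{-k}`, the radial differential equation improves the exponent, until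
the pairings have bounded derivatives. -/
lemma hasBoundaryDistribution_of_growth {n : ℕ} (hn : 3 ≤ n) {u : E n → ℝ}
    (hu : ContDiffOn ℝ 2 u (ball (0 : E n) 1)) (hH : HHarmonic n u) {M κ : ℝ} (hM : 0 ≤ M)
    (hb : ∀ a ∈ ball (0 : E n) 1, |u a| ≤ M * (1 - ‖a‖) ^ (-κ)) :
    HasBoundaryDistribution n u := by
  have hn1 : 1 ≤ n := by omega
  obtain ⟨m, rfl⟩ : ∃ m, n = m + 3 := ⟨n - 3, by omega⟩
  have hIoo : ∀ r ∈ Ico (1 / 2 : ℝ) 1, r ∈ Ioo (0 : ℝ) 1 := fun r hr =>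
    ⟨by linarith [hr.1], hr.2⟩
  -- `P k`: all pairings grow at most like `(1 - r)^{-k}`
  let P : ℕ → Prop := fun k => ∀ Φ : E (m + 3) → ℝ, ContDiff ℝ ∞ Φ → ∃ C, 0 ≤ C ∧
    ∀ r ∈ Ico (1 / 2 : ℝ) 1,
      |∫ ζ, u (r • ζ) * Φ ζ ∂(sphMeasure (m + 3))| ≤ C * ((1 - r) ^ k)⁻¹
  have hderiv : ∀ (Φ : E (m + 3) → ℝ), ContDiff ℝ ∞ Φ → ∀ r ∈ Ico (1 / 2 : ℝ) 1,
      HasDerivAt (fun r : ℝ => ∫ ζ, u (r • ζ) * Φ ζ ∂(sphMeasure (m + 3)))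
        ((∫ ζ, vf (.id ℝ (E (m + 3))) u (r • ζ) * Φ ζ ∂(sphMeasure (m + 3))) / r) r :=
    fun Φ hΦ r hr =>
      pairing_hasDerivAt hn1 (hu.of_le (by norm_num)) hΦ.continuous (hIoo r hr)
  -- the derivative of a pairing is controlled with one power of `(1 - r)⁻¹` less
  have hstep : ∀ k, P (k + 1) → ∀ Φ : E (m + 3) → ℝ, ContDiff ℝ ∞ Φ → ∃ C, 0 ≤ C ∧
      ∀ r ∈ Ico (1 / 2 : ℝ) 1,
        |(∫ ζ, vf (.id ℝ (E (m + 3))) u (r • ζ) * Φ ζ ∂(sphMeasure (m + 3))) / r|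
          ≤ C * ((1 - r) ^ k)⁻¹ := by
    intro k hk Φ hΦ
    obtain ⟨C, hC, hCb⟩ := hk (sphLap Φ) (sphLap_contDiff hΦ)
    obtain ⟨C', hC', hCb'⟩ := ode_bound (m := m) hC (fun r hr =>
      (pairing_ode hn1 hu hH hΦ hr).congr_deriv (by push_cast; ring)) hCb
    refine ⟨2 * C', by positivity, fun r hr => ?_⟩
    have h0 := (hIoo r hr).1
    have h1 : (0 : ℝ) < 1 - r := by linarith [hr.2]
    rw [abs_div, abs_of_pos h0, div_le_iff₀ h0]
    have h2 : 0 ≤ C' * ((1 - r) ^ k)⁻¹ := by positivity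
    nlinarith [hCb' r hr, hr.1]
  -- An exponent `q + 3` on the pairings gives `q + 2` on their derivatives, hence `q + 1` on the
  -- pairings. Descending through odd exponents keeps clear of the logarithm at exponent `1` of
  -- the derivative.
  have hdesc : ∀ N, P (2 * N + 1) → P 1 := by
    intro N
    induction N with
    | zero => exact id
    | succ N ih =>
      intro h
      refine ih fun Φ hΦ => ?_
      obtain ⟨C, hC, hCb⟩ := hstep (2 * N + 2) h Φ hΦ
      exact ⟨_, by positivity, growth_of_deriv hC (hderiv Φ hΦ) hCb⟩
  obtain ⟨N, hN⟩ := exists_nat_ge κ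
  have hstart : P (2 * N + 1) := by
    intro Φ hΦ
    obtain ⟨B, hB⟩ := (isCompact_sphere (0 : E (m + 3)) 1).exists_bound_of_continuousOn
      hΦ.continuous.continuousOn
    refine ⟨M * |B|, by positivity, fun r hr => ?_⟩
    have h1 : (0 : ℝ) < 1 - r := by linarith [hr.2]
    have hle : ∀ᵐ ζ ∂(sphMeasure (m + 3)),
        ‖u (r • ζ) * Φ ζ‖ ≤ M * |B| * ((1 - r) ^ (2 * N + 1))⁻¹ := by
      filter_upwards [sph_ae_mem (m + 3)] with ζ hζ
      have hnorm : ‖r • ζ‖ = r := by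
        have := mem_sphere_zero_iff_norm.1 hζ
        rw [norm_smul, this, mul_one, Real.norm_of_nonneg (hIoo r hr).1.le]
      have h2 := hb _ (smul_mem_ball (hIoo r hr) hζ)
      rw [hnorm] at h2
      have h3 : (1 - r) ^ (-κ) ≤ ((1 - r) ^ (2 * N + 1))⁻¹ := by
        rw [← Real.rpow_natCast, ← Real.rpow_neg h1.le]
        refine Real.rpow_le_rpow_of_exponent_ge h1 (by linarith [hr.1]) ?_
        push_cast
        linarith [(Nat.cast_nonneg N : (0 : ℝ) ≤ N)]
      rw [norm_mul, Real.norm_eq_abs]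
      calc |u (r • ζ)| * ‖Φ ζ‖ ≤ (M * ((1 - r) ^ (2 * N + 1))⁻¹) * |B| :=
            mul_le_mul (h2.trans (mul_le_mul_of_nonneg_left h3 hM))
              ((hB ζ hζ).trans (le_abs_self B)) (norm_nonneg _) (by positivity)
        _ = _ := by ring
    have hfin := sph_finite (m + 3) hn1
    have h4 := norm_integral_le_of_norm_le_const hle
    rwa [measureReal_def, sph_univ (m + 3) hn1, ENNReal.toReal_one, mul_one] at h4
  intro Φ hΦ
  obtain ⟨C, hC, hCb⟩ := hstep 0 (hdesc N hstart) Φ hΦ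
  -- exponent `0` for the derivative: the pairing is Lipschitz up to `r = 1`
  have hlip : LipschitzOnWith C.toNNReal
      (fun r : ℝ => ∫ ζ, u (r • ζ) * Φ ζ ∂(sphMeasure (m + 3))) (Ico (1 / 2 : ℝ) 1) :=
    (convex_Ico _ _).lipschitzOnWith_of_nnnorm_hasDerivWithin_le
      (fun r hr => (hderiv Φ hΦ r hr).hasDerivWithinAt)
      fun r hr => by
        rw [← NNReal.coe_le_coe, coe_nnnorm, Real.norm_eq_abs, Real.coe_toNNReal C hC]
        simpa using hCb r hr
  obtain ⟨g, hg, hgeq⟩ := hlip.extend_real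
  refine ⟨g 1, (hg.continuous.continuousAt.mono_left nhdsWithin_le_nhds).congr' ?_⟩
  filter_upwards [Ioo_mem_nhdsLT (by norm_num : (1 / 2 : ℝ) < 1)] with r hr
  exact (hgeq ⟨hr.1.le, hr.2⟩).symm

/-- If `u` is `H`-harmonic on `B_n` with
`K = sup_{0<r<1} (∫ |u(rζ)|^p dσ(ζ))^{1/p} < ∞`, then `|u(a)| ≤ C·K·(1-|a|)^{-(n-1)/p}` on `B_n`
for a constant `C = C(n,p)`; in particular `u` has a boundary distribution. -/
theorem stmt7 (n : ℕ) (hn : 3 ≤ n) (p : ℝ) (hp : 0 < p) :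
    ∃ C : ℝ, 0 < C ∧ ∀ (u : E n → ℝ) (K : ℝ),
      ContDiffOn ℝ 2 u (ball (0 : E n) 1) → HHarmonic n u → 0 ≤ K →
      (∀ r ∈ Ioo (0 : ℝ) 1,
        (∫⁻ ζ, ENNReal.ofReal (|u (r • ζ)| ^ p) ∂(sphMeasure n)) ≤ ENNReal.ofReal (K ^ p)) →
      (∀ a ∈ ball (0 : E n) 1, |u a| ≤ C * K * (1 - ‖a‖) ^ (-((n : ℝ) - 1) / p)) ∧
        HasBoundaryDistribution n u := by
  obtain ⟨C, hC, h⟩ := exists_pointwise_bound n hn p hp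
  refine ⟨C, hC, fun u K hu hH hK hint => ?_⟩
  have hbound := h u K hu hH hK hint
  refine ⟨hbound, hasBoundaryDistribution_of_growth hn hu hH (κ := ((n : ℝ) - 1) / p)
    (mul_nonneg hC.le hK) fun a ha => ?_⟩
  rw [← neg_div]
  exact hbound a ha
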